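/- arXiv:2412.10837 — 3 statements merged into one kernel-verified Lean document; each statement's English description precedes it below -/
import Mathlib

section
/- Every O(n)-equivariant linear map φ : (ℝⁿ)^{⊗k} → (ℝⁿ)^{⊗l} is an ℝ-linear combination of the maps E_β, where β ranges over all perfect matchings of [l+k]; equivalently, the linear map from the free ℝ-vector space on perfect matchings of [l+k] to Hom_{O(n)}((ℝⁿ)^{⊗k}, (ℝⁿ)^{⊗l}) sending β to E_β is surjective. -/
open Classical
noncomputable section

/-- The `k`-th tensor (Kronecker) power of an `n × n` real matrix. -/
def tensorPow (n k : ℕ) (g : Matrix (Fin n) (Fin n) ℝ) :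
    Matrix (Fin k → Fin n) (Fin k → Fin n) ℝ :=
  Matrix.of fun I J => ∏ i, g (I i) (J i)

/-- The matrix `D_π : (ℝⁿ)^{⊗k} → (ℝⁿ)^{⊗l}` associated to a set partition `π` of
`[l+k]` (encoded as a setoid on `Fin (l+k)`, top row first). -/
def Dmat (n l k : ℕ) (π : Setoid (Fin (l + k))) :
    Matrix (Fin l → Fin n) (Fin k → Fin n) ℝ :=
  Matrix.of fun I J =>
    if ∀ x y, π.r x y → Fin.append I J x = Fin.append I J y then (1 : ℝ) else 0

/-- The set partition whose blocks are the pairs `{x, f x}` of a (fixed-point-free)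
involution `f`, i.e. a perfect matching of `Fin N`. -/
def matchingSetoid {N : ℕ} (f : Fin N → Fin N) (hf : ∀ x, f (f x) = x) : Setoid (Fin N) where
  r x y := y = x ∨ y = f x
  iseqv := by
    constructor
    · intro x; exact Or.inl rfl
    · rintro x y (rfl | rfl)
      · exact Or.inl rfl
      · right; rw [hf]
    · rintro x y z (rfl | rfl) h
      · exact h
      · rcases h with rfl | rfl
        · right; rfl
        · left; rw [hf]


namespace FFT
variable {n : ℕ}

/-- O(n)-invariant tensors of degree N. -/
def Inv (n N : ℕ) : Submodule ℝ ((Fin N → Fin n) → ℝ) where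
  carrier := {T | ∀ g : Matrix (Fin n) (Fin n) ℝ, g.transpose * g = 1 →
    ∀ I, ∑ J, (∏ x, g (I x) (J x)) * T J = T I}
  zero_mem' := by intro g hg I; simp
  add_mem' := by
    intro T S hT hS g hg I
    simp only [Pi.add_apply, mul_add, Finset.sum_add_distrib]
    rw [hT g hg I, hS g hg I]
  smul_mem' := by
    intro c T hT g hg I
    simp only [Pi.smul_apply, smul_eq_mul]
    rw [← hT g hg I, Finset.mul_sum]
    refine Finset.sum_congr rfl fun J _ => by ring

inductive IsM (n : ℕ) : (N : ℕ) → ((Fin N → Fin n) → ℝ) → Prop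
  | zero : IsM n 0 (fun _ => 1)
  | step (N : ℕ) (β : (Fin N → Fin n) → ℝ) (h : IsM n N β) :
      IsM n (N + 2) (fun I => if I 0 = I 1 then β (fun x => I x.succ.succ) else 0)
  | perm (N : ℕ) (β : (Fin N → Fin n) → ℝ) (σ : Equiv.Perm (Fin N)) (h : IsM n N β) :
      IsM n N (fun I => β (I ∘ σ))

theorem sum_cons {N : ℕ} (F : (Fin (N + 1) → Fin n) → ℝ) :
    ∑ J, F J = ∑ a : Fin n, ∑ J' : Fin N → Fin n, F (Fin.cons a J') := by
  rw [← Fintype.sum_prod_type']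
  exact (Fintype.sum_equiv (Fin.consEquiv (fun _ : Fin (N + 1) => Fin n)) _ _ (fun _ => rfl)).symm

theorem sum_cons2 {N : ℕ} (F : (Fin (N + 2) → Fin n) → ℝ) :
    ∑ J, F J = ∑ a : Fin n, ∑ b : Fin n, ∑ J' : Fin N → Fin n, F (Fin.cons a (Fin.cons b J')) := by
  rw [sum_cons]
  exact Finset.sum_congr rfl fun a _ => sum_cons _

theorem cons2_eta {N : ℕ} (I : Fin (N + 2) → Fin n) :
    I = Fin.cons (I 0) (Fin.cons (I 1) (fun x => I x.succ.succ)) := by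
  funext x
  refine Fin.cases ?_ (fun y => ?_) x
  · simp
  · refine Fin.cases ?_ (fun z => ?_) y <;> simp

theorem prod_cons2 {N : ℕ} (g : Matrix (Fin n) (Fin n) ℝ) (a b c d : Fin n) (I J : Fin N → Fin n) :
    ∏ x : Fin (N + 2), g ((Fin.cons a (Fin.cons b I) : Fin (N + 2) → Fin n) x)
      ((Fin.cons c (Fin.cons d J) : Fin (N + 2) → Fin n) x)
      = g a c * (g b d * ∏ x, g (I x) (J x)) := by
  rw [Fin.prod_univ_succ, Fin.prod_univ_succ]; simp

theorem perm_inv {N : ℕ} {T : (Fin N → Fin n) → ℝ} (hT : T ∈ Inv n N) (σ : Equiv.Perm (Fin N)) :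
    (fun I => T (I ∘ σ)) ∈ Inv n N := by
  intro g hg I
  show _ = T (I ∘ σ)
  rw [← hT g hg (I ∘ σ)]
  refine Fintype.sum_equiv (Equiv.arrowCongr σ.symm (Equiv.refl _)) _ _ fun J => ?_
  have : (Equiv.arrowCongr σ.symm (Equiv.refl (Fin n))) J = J ∘ σ := by
    funext x; simp [Equiv.arrowCongr]
  rw [this]
  congr 1
  exact (Equiv.prod_comp σ (fun x => g (I x) (J x))).symm

theorem isM_inv {N : ℕ} {β : (Fin N → Fin n) → ℝ} (h : IsM n N β) : β ∈ Inv n N := by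
  induction h with
  | zero => intro g hg I; simp
  | perm N β σ h ih => exact perm_inv ih σ
  | step N β h ih =>
    intro g hg I
    have hg' : g * g.transpose = 1 := mul_eq_one_comm.mp hg
    rw [sum_cons2]
    obtain ⟨a, b, I', rfl⟩ : ∃ a b I', I = (Fin.cons a (Fin.cons b I') : Fin (N + 2) → Fin n) :=
      ⟨_, _, _, cons2_eta I⟩
    simp only [prod_cons2]
    have h1 : ∀ (c d : Fin n) (J : Fin N → Fin n),
      (Fin.cons c (Fin.cons d J) : Fin (N + 2) → Fin n) 1 = d := fun c d J => rfl
    simp only [Fin.cons_zero, h1, Fin.cons_succ, mul_ite, mul_zero]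
    have e : ∀ c d : Fin n, (∑ J' : Fin N → Fin n, if c = d then g a c * (g b d * ∏ x, g (I' x) (J' x)) * β J' else 0)
       = if c = d then g a c * g b d * β I' else 0 := by
      intro c d
      split_ifs with hcd
      · rw [← ih g hg I', Finset.mul_sum]
        exact Finset.sum_congr rfl fun J _ => by ring
      · simp
    simp only [e, Finset.sum_ite_eq, Finset.mem_univ, if_true]
    rw [← Finset.sum_mul]
    have := congrFun (congrFun hg' a) b
    simp only [Matrix.mul_apply, Matrix.transpose_apply, Matrix.one_apply] at this
    rw [this]; split_ifs <;> simp

def contr {N : ℕ} (T : (Fin (N + 2) → Fin n) → ℝ) : (Fin N → Fin n) → ℝ :=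
  fun I => ∑ a, T (Fin.cons a (Fin.cons a I))

theorem contr_inv {N : ℕ} {T : (Fin (N + 2) → Fin n) → ℝ} (hT : T ∈ Inv n (N + 2)) :
    contr T ∈ Inv n N := by
  intro g hg I
  have hg' : ∀ c d, ∑ a, g a c * g a d = if c = d then 1 else 0 := by
    intro c d
    have := congrFun (congrFun hg c) d
    simpa only [Matrix.mul_apply, Matrix.transpose_apply, Matrix.one_apply] using this
  symm
  unfold contr
  have e : ∀ a, T (Fin.cons a (Fin.cons a I)) = ∑ c, ∑ d, (g a c * g a d) *
      ∑ J : Fin N → Fin n, (∏ x, g (I x) (J x)) * T (Fin.cons c (Fin.cons d J)) := by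
    intro a
    rw [← hT g hg, sum_cons2]
    simp only [prod_cons2, Finset.mul_sum]
    refine Finset.sum_congr rfl fun c _ => Finset.sum_congr rfl fun d _ =>
      Finset.sum_congr rfl fun J _ => by ring
  simp only [e]
  rw [Finset.sum_comm]
  have : ∀ c, ∑ a, ∑ d, (g a c * g a d) *
      ∑ J : Fin N → Fin n, (∏ x, g (I x) (J x)) * T (Fin.cons c (Fin.cons d J))
      = ∑ J : Fin N → Fin n, (∏ x, g (I x) (J x)) * T (Fin.cons c (Fin.cons c J)) := by
    intro c
    rw [Finset.sum_comm]
    simp only [← Finset.sum_mul, hg']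
    simp
  simp only [this]
  simp only [Finset.mul_sum]
  exact Finset.sum_comm

theorem contr_orth {N : ℕ} (T : (Fin (N + 2) → Fin n) → ℝ)
    (h : ∀ β, IsM n (N + 2) β → ∑ I, T I * β I = 0) (β) (hβ : IsM n N β) :
    ∑ I, contr T I * β I = 0 := by
  rw [← h _ (IsM.step N β hβ), sum_cons2]
  have h1 : ∀ (c d : Fin n) (J : Fin N → Fin n),
      (Fin.cons c (Fin.cons d J) : Fin (N + 2) → Fin n) 1 = d := fun c d J => rfl
  simp only [Fin.cons_zero, h1, Fin.cons_succ, mul_ite, mul_zero]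
  have e : ∀ c d : Fin n, (∑ J' : Fin N → Fin n, if c = d then T (Fin.cons c (Fin.cons d J')) * β J' else 0)
       = if c = d then ∑ J' : Fin N → Fin n, T (Fin.cons c (Fin.cons d J')) * β J' else 0 := by
    intro c d
    split_ifs with hcd <;> simp
  simp only [e, Finset.sum_ite_eq, Finset.mem_univ, if_true]
  simp only [contr, Finset.sum_mul]
  exact Finset.sum_comm

theorem perm_orth {N : ℕ} (T : (Fin N → Fin n) → ℝ) (σ : Equiv.Perm (Fin N))
    (h : ∀ β, IsM n N β → ∑ I, T I * β I = 0) (β) (hβ : IsM n N β) :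
    ∑ I : Fin N → Fin n, T (I ∘ σ) * β I = 0 := by
  rw [← h _ (IsM.perm N β σ.symm hβ)]
  refine Fintype.sum_equiv (Equiv.arrowCongr σ.symm (Equiv.refl _)) _ _ fun J => ?_
  have : (Equiv.arrowCongr σ.symm (Equiv.refl (Fin n))) J = J ∘ σ := by
    funext x; simp [Equiv.arrowCongr]
  rw [this]
  congr 2
  funext x; simp

theorem exists_perm {N : ℕ} {i j : Fin (N + 2)} (hij : i ≠ j) :
    ∃ σ : Equiv.Perm (Fin (N + 2)), σ 0 = i ∧ σ 1 = j := by
  refine ⟨Equiv.swap 0 i * Equiv.swap 1 (Equiv.swap 0 i j), ?_, ?_⟩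
  · rw [Equiv.Perm.mul_apply, Equiv.swap_apply_of_ne_of_ne (a := 1)]
    · simp
    · simp
    · intro h
      have := congrArg (Equiv.swap 0 i) h
      simp at this
      exact hij this
  · simp

/-- infinitesimal action -/
def D {N : ℕ} (a b : Fin n) (T : (Fin N → Fin n) → ℝ) : (Fin N → Fin n) → ℝ :=
  fun I => ∑ i, if I i = a then T (Function.update I i b) else 0

theorem D_adj {N : ℕ} (a b : Fin n) (T S : (Fin N → Fin n) → ℝ) :
    ∑ I, D a b T I * S I = ∑ I, T I * D b a S I := by
  simp only [D, Finset.sum_mul, Finset.mul_sum]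
  rw [Finset.sum_comm]
  conv_rhs => rw [Finset.sum_comm]
  refine Finset.sum_congr rfl fun i _ => ?_
  simp only [ite_mul, zero_mul, mul_ite, mul_zero]
  rw [← Finset.sum_filter, ← Finset.sum_filter]
  refine Finset.sum_nbij' (fun I => Function.update I i b) (fun I => Function.update I i a) ?_ ?_ ?_ ?_ ?_
  · intro I hI; simp
  · intro I hI; simp
  · intro I hI
    simp only [Finset.mem_filter] at hI
    simp [← hI.2]
  · intro I hI
    simp only [Finset.mem_filter] at hI
    simp [← hI.2]
  · intro I hI
    simp only [Finset.mem_filter] at hI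
    simp [← hI.2]

theorem casimir {N : ℕ} (T : (Fin N → Fin n) → ℝ)
    (hT : ∀ (i j : Fin N), i ≠ j → ∀ I,
      ∑ b, T (Function.update (Function.update I i b) j b) = 0) (I) :
    ∑ a, ∑ b, D a b (D a b T) I = N * T I := by
  have key : ∀ i : Fin N, ∑ a, ∑ b, (if I i = a then D a b T (Function.update I i b) else 0) = T I := by
    intro i
    have : ∀ a, ∑ b, (if I i = a then D a b T (Function.update I i b) else 0) =
      if I i = a then ∑ b, D a b T (Function.update I i b) else 0 := by
      intro a; split_ifs <;> simp
    simp only [this, Finset.sum_ite_eq, Finset.mem_univ, if_true]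
    unfold D
    rw [Finset.sum_comm, Finset.sum_eq_single i]
    · simp
    · intro j _ hj
      simp only [Function.update_of_ne hj]
      split_ifs
      · exact hT i j hj.symm I
      · simp
    · simp
  calc ∑ a, ∑ b, D a b (D a b T) I
      = ∑ i : Fin N, ∑ a, ∑ b, (if I i = a then D a b T (Function.update I i b) else 0) := by
        conv_lhs => enter [2, a, 2, b]; rw [D]
        conv_lhs => enter [2, a]; rw [Finset.sum_comm]
        rw [Finset.sum_comm]
    _ = N * T I := by
        rw [Finset.sum_congr rfl fun i _ => key i]; simp

theorem even_count {N : ℕ} {T : (Fin N → Fin n) → ℝ} (hT : T ∈ Inv n N) (I : Fin N → Fin n)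
    (hI : T I ≠ 0) (a : Fin n) : Even (Finset.univ.filter fun i => I i = a).card := by
  have h := hT (Matrix.diagonal fun x => if x = a then -1 else 1) (by
    rw [Matrix.diagonal_transpose, Matrix.diagonal_mul_diagonal, ← Matrix.diagonal_one]
    congr 1; funext x; split_ifs <;> simp) I
  rw [Finset.sum_eq_single I] at h
  · simp only [Matrix.diagonal_apply_eq] at h
    rw [Finset.prod_ite] at h
    simp only [Finset.prod_const, one_pow, mul_one] at h
    have := mul_right_cancel₀ hI (h.trans (one_mul _).symm)
    by_contra hc
    rw [Nat.not_even_iff_odd] at hc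
    rw [hc.neg_one_pow] at this
    norm_num at this
  · intro J _ hJ
    obtain ⟨x, hx⟩ := Function.ne_iff.mp hJ
    rw [Finset.prod_eq_zero (Finset.mem_univ x), zero_mul]
    exact Matrix.diagonal_apply_ne _ hx.symm
  · simp

theorem D_diag {N : ℕ} (T : (Fin N → Fin n) → ℝ) (a : Fin n) (I) :
    D a a T I = (Finset.univ.filter fun i => I i = a).card * T I := by
  unfold D
  rw [Finset.sum_congr rfl (g := fun i => if I i = a then T I else 0)]
  · rw [← Finset.sum_filter]; simp
  · intro i _
    split_ifs with h
    · simp [← h]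
    · rfl

theorem lie_inv {N : ℕ} {T : (Fin N → Fin n) → ℝ} (hT : T ∈ Inv n N)
    (g : ℝ → Matrix (Fin n) (Fin n) ℝ) (X : Matrix (Fin n) (Fin n) ℝ) (h0 : g 0 = 1)
    (ho : ∀ t, (g t).transpose * g t = 1)
    (hd : ∀ x y, HasDerivAt (fun t => g t x y) (X x y) 0) (I : Fin N → Fin n) :
    ∑ i, ∑ c, X (I i) c * T (Function.update I i c) = 0 := by
  have h1 : HasDerivAt (fun t => ∑ J, (∏ x, g t (I x) (J x)) * T J)
      (∑ J : Fin N → Fin n, (∑ i, (∏ x ∈ Finset.univ.erase i, g 0 (I x) (J x)) • X (I i) (J i)) * T J) 0 := by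
    refine HasDerivAt.fun_sum fun J _ => ?_
    refine HasDerivAt.mul_const ?_ _
    exact HasDerivAt.fun_finsetProd fun i _ => hd _ _
  have h2 : (fun t => ∑ J, (∏ x, g t (I x) (J x)) * T J) = fun _ => T I := by
    funext t; exact hT (g t) (ho t) I
  rw [h2] at h1
  have h3 := h1.unique (hasDerivAt_const _ _)
  rw [← h3]
  simp only [Finset.sum_mul, h0, smul_eq_mul]
  rw [Finset.sum_comm (s := (Finset.univ : Finset (Fin N → Fin n)))]
  refine Finset.sum_congr rfl fun i _ => ?_
  refine Finset.sum_of_injOn (fun c => Function.update I i c) ?_ ?_ ?_ ?_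
  · intro c _ d _ h
    exact Function.update_injective I i h
  · intro c _; simp
  · intro J _ hJ
    have : ∃ x, x ≠ i ∧ I x ≠ J x := by
      by_contra hc
      push Not at hc
      refine hJ ⟨J i, by simp, ?_⟩
      funext x
      by_cases hx : x = i
      · subst hx; simp
      · simp [hx, hc x hx]
    obtain ⟨x, hx, hne⟩ := this
    have hz : ∏ x ∈ Finset.univ.erase i, (1 : Matrix (Fin n) (Fin n) ℝ) (I x) (J x) = 0 :=
      Finset.prod_eq_zero (i := x) (Finset.mem_erase.mpr ⟨hx, Finset.mem_univ _⟩)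
        (Matrix.one_apply_ne hne)
    rw [hz]; simp
  · intro c _
    rw [Finset.prod_eq_one]
    · simp
    · intro x hx
      have : x ≠ i := by simpa using hx
      have hx1 : I x = Function.update I i c x := by simp [this]
      show (1 : Matrix (Fin n) (Fin n) ℝ) (I x) (Function.update I i c x) = 1
      rw [← hx1]
      exact Matrix.one_apply_eq _

theorem D_symm {N : ℕ} {T : (Fin N → Fin n) → ℝ} (hT : T ∈ Inv n N) (a b : Fin n) :
    D a b T = D b a T := by
  by_cases hab : a = b
  · rw [hab]
  funext I
  set X : Matrix (Fin n) (Fin n) ℝ := Matrix.single a b 1 - Matrix.single b a 1 with hX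
  have hXt : X.transpose = -X := by simp [hX]
  have hX3 : X * X * X = -X := by
    simp [hX, sub_mul, mul_sub, Matrix.single_mul_single_of_ne, hab, Ne.symm hab]
    abel
  have hl := lie_inv hT (fun t => 1 + Real.sin t • X + (1 - Real.cos t) • (X * X)) X (by simp) ?_ ?_ I
  · have : D a b T I - D b a T I = 0 := by
      rw [← hl]
      unfold D
      rw [← Finset.sum_sub_distrib]
      refine Finset.sum_congr rfl fun i _ => ?_
      simp only [hX, Matrix.sub_apply, sub_mul, Finset.sum_sub_distrib, Matrix.single_apply]
      congr 1
      · by_cases h : I i = a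
        · simp [h]
        · simp [h, Ne.symm h]
      · by_cases h : I i = b
        · simp [h]
        · simp [h, Ne.symm h]
    linarith
  · intro t
    simp only [Matrix.transpose_add, Matrix.transpose_smul, Matrix.transpose_mul, hXt,
      Matrix.transpose_one]
    have h4 : X * X * (X * X) = -(X * X) := by rw [← mul_assoc, hX3]; simp
    have hX3' : X * (X * X) = -X := by rw [← mul_assoc, hX3]
    have hs := Real.sin_sq_add_cos_sq t
    simp only [add_mul, mul_add, one_mul, mul_one, neg_mul_neg, smul_mul_assoc, mul_smul_comm, neg_mul, mul_neg, h4, hX3,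
      hX3', smul_neg, neg_neg, smul_smul]
    have h5 : Real.sin t * Real.sin t = 1 - Real.cos t * Real.cos t := by nlinarith
    have h6 : Real.sin t • Real.sin t • (X * X) = (1 - Real.cos t * Real.cos t) • (X * X) := by
      rw [smul_smul, h5]
    simp only [smul_add, smul_neg, h6]
    module
  · intro x y
    have e1 : HasDerivAt (fun t => (1 : Matrix (Fin n) (Fin n) ℝ) x y + Real.sin t * X x y + (1 - Real.cos t) * (X * X) x y)
      (0 + Real.cos 0 * X x y + (0 - -Real.sin 0) * (X * X) x y) 0 := by
      refine ((hasDerivAt_const _ _).add ((Real.hasDerivAt_sin 0).mul_const _)).add ?_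
      exact ((hasDerivAt_const _ _).sub (Real.hasDerivAt_cos 0)).mul_const _
    simpa using e1

theorem core {N : ℕ} (hN : 0 < N) {T : (Fin N → Fin n) → ℝ} (hT : T ∈ Inv n N)
    (hc : ∀ (i j : Fin N), i ≠ j → ∀ I,
      ∑ b, T (Function.update (Function.update I i b) j b) = 0) : T = 0 := by
  have h1 : ∑ a, ∑ b, ∑ I, D a b T I * D a b T I = N * ∑ I, T I * T I := by
    have : ∀ a b : Fin n, ∑ I, D a b T I * D a b T I = ∑ I, D a b (D a b T) I * T I := by
      intro a b
      rw [D_adj a b (D a b T) T, ← D_symm hT a b]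
    simp only [this]
    conv_lhs => enter [2, a]; rw [Finset.sum_comm]
    rw [Finset.sum_comm, Finset.mul_sum]
    refine Finset.sum_congr rfl fun I _ => ?_
    simp only [← Finset.sum_mul]
    rw [casimir T hc I]; ring
  have h2 : ∑ a, ∑ I, D a a T I * D a a T I ≤ ∑ a, ∑ b, ∑ I, D a b T I * D a b T I := by
    refine Finset.sum_le_sum fun a _ => ?_
    exact Finset.single_le_sum (f := fun b => ∑ I, D a b T I * D a b T I)
      (fun b _ => Finset.sum_nonneg fun I _ => mul_self_nonneg _) (Finset.mem_univ a)
  have h3 : 2 * (N * ∑ I, T I * T I) ≤ ∑ a, ∑ I, D a a T I * D a a T I := by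
    rw [Finset.sum_comm, Finset.mul_sum, Finset.mul_sum]
    refine Finset.sum_le_sum fun I _ => ?_
    by_cases hI : T I = 0
    · simp [hI, D_diag]
    have hcard : (N : ℝ) = ∑ a : Fin n, ((Finset.univ.filter fun i => I i = a).card : ℝ) := by
      have := Finset.card_eq_sum_card_fiberwise (f := I) (s := Finset.univ) (t := Finset.univ) (by simp)
      rw [Finset.card_univ, Fintype.card_fin] at this
      exact_mod_cast this
    rw [hcard, Finset.sum_mul, Finset.mul_sum]
    refine Finset.sum_le_sum fun a _ => ?_
    rw [D_diag]
    obtain ⟨m, hm⟩ := even_count hT I hI a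
    rw [hm]
    have hmm : (m : ℝ) ≤ m * m := by exact_mod_cast Nat.le_mul_self m
    push_cast
    nlinarith [mul_le_mul_of_nonneg_right hmm (mul_self_nonneg (T I))]
  have h4 : (N : ℝ) * ∑ I, T I * T I ≤ 0 := by linarith
  have hN' : (0 : ℝ) < N := by exact_mod_cast hN
  have h5 : ∑ I, T I * T I = 0 :=
    le_antisymm (nonpos_of_mul_nonpos_right h4 hN') (Finset.sum_nonneg fun I _ => mul_self_nonneg _)
  funext I
  have := (Finset.sum_eq_zero_iff_of_nonneg fun I _ => mul_self_nonneg (T I)).mp h5 I (Finset.mem_univ _)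
  simpa using this

theorem vanish (N : ℕ) : ∀ T : (Fin N → Fin n) → ℝ, T ∈ Inv n N →
    (∀ β, IsM n N β → ∑ I, T I * β I = 0) → T = 0 := by
  induction N using Nat.twoStepInduction with
  | zero =>
    intro T hT h
    have := h _ IsM.zero
    funext I
    simpa [Subsingleton.elim I default] using this
  | one =>
    intro T hT h
    exact core one_pos hT fun i j hij => absurd (Subsingleton.elim i j) hij
  | more N ih _ =>
    intro T hT h
    refine core (by omega) hT fun i j hij I => ?_
    obtain ⟨σ, h0, h1⟩ := exists_perm hij
    have hz := ih (contr fun I => T (I ∘ σ.symm)) (contr_inv (perm_inv hT _))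
      (contr_orth _ (perm_orth T σ.symm h))
    have hz' := congrFun hz (fun x => I (σ x.succ.succ))
    simp only [contr, Pi.zero_apply] at hz'
    rw [← hz']
    refine Finset.sum_congr rfl fun b _ => ?_
    congr 1
    funext y
    obtain ⟨x, rfl⟩ := σ.surjective y
    simp only [Function.comp_apply, Equiv.symm_apply_apply]
    refine Fin.cases ?_ (fun y => ?_) x
    · rw [h0]; simp [hij]
    · refine Fin.cases ?_ (fun z => ?_) y
      · rw [Fin.succ_zero_eq_one, h1]; simp
      · rw [Function.update_of_ne, Function.update_of_ne]
        · simp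
        · rw [← h0]; intro hh; have := σ.injective hh; exact absurd this (Fin.succ_ne_zero _)
        · rw [← h1]; intro hh; have := σ.injective hh
          rw [← Fin.succ_zero_eq_one] at this
          exact absurd (Fin.succ_injective _ this) (Fin.succ_ne_zero _)

theorem inv_span {N : ℕ} (T : (Fin N → Fin n) → ℝ) (hT : T ∈ Inv n N) :
    T ∈ Submodule.span ℝ {β | IsM n N β} := by
  let e := WithLp.linearEquiv 2 ℝ ((Fin N → Fin n) → ℝ)
  let W := Submodule.span ℝ {β | IsM n N β}
  let K : Submodule ℝ (EuclideanSpace ℝ (Fin N → Fin n)) := W.comap e.toLinearMap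
  obtain ⟨y, hy, z, hz, hyz⟩ := K.exists_add_mem_mem_orthogonal (e.symm T)
  have hyW : e y ∈ W := hy
  have hW : W ≤ Inv n N := Submodule.span_le.mpr fun β hβ => isM_inv hβ
  have hT' : T = e y + e z := by
    rw [← map_add, ← hyz]; simp
  have hzI : e z ∈ Inv n N := by
    have : e z = T - e y := by rw [hT']; simp
    rw [this]; exact Submodule.sub_mem _ hT (hW hyW)
  have : e z = 0 := by
    refine vanish N _ hzI fun β hβ => ?_
    have hb : e.symm β ∈ K := by
      show e (e.symm β) ∈ W
      rw [LinearEquiv.apply_symm_apply]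
      exact Submodule.subset_span hβ
    have := hz _ hb
    rw [PiLp.inner_apply] at this
    rw [← this]
    refine Finset.sum_congr rfl fun I _ => ?_
    rfl
  rw [hT', this, add_zero]; exact hyW

theorem isM_match {N : ℕ} {β : (Fin N → Fin n) → ℝ} (h : IsM n N β) :
    ∃ f : Fin N → Fin N, (∀ x, f (f x) = x) ∧ (∀ x, f x ≠ x) ∧
      ∀ I, β I = if ∀ x, I x = I (f x) then 1 else 0 := by
  induction h with
  | zero => exact ⟨id, fun x => rfl, fun x => x.elim0, fun I => by simp⟩
  | step N β h ih =>
    obtain ⟨f, h1, h2, h3⟩ := ih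
    refine ⟨Fin.cons 1 (Fin.cons 0 fun x => (f x).succ.succ), ?_, ?_, ?_⟩
    · intro x
      refine Fin.cases ?_ (fun y => ?_) x
      · rfl
      · refine Fin.cases ?_ (fun z => ?_) y
        · rfl
        · simp [h1]
    · intro x
      refine Fin.cases ?_ (fun y => ?_) x
      · simp
      · refine Fin.cases ?_ (fun z => ?_) y
        · simp
        · simp [h2]
    · intro I
      beta_reduce
      rw [h3]
      have : (∀ x, I x = I ((Fin.cons 1 (Fin.cons 0 fun x => (f x).succ.succ) : Fin (N + 2) → Fin (N + 2)) x))
        ↔ I 0 = I 1 ∧ ∀ x : Fin N, I x.succ.succ = I (f x).succ.succ := by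
        rw [Fin.forall_fin_succ, Fin.forall_fin_succ]
        simp only [Fin.cons_zero, Fin.cons_succ, Fin.succ_zero_eq_one]
        constructor
        · rintro ⟨a, b, c⟩; exact ⟨a, c⟩
        · rintro ⟨a, c⟩; exact ⟨a, a.symm, c⟩
      simp only [this]
      split_ifs <;> tauto
  | perm N β σ h ih =>
    obtain ⟨f, h1, h2, h3⟩ := ih
    refine ⟨fun x => σ (f (σ.symm x)), fun x => by simp [h1], fun x hx => ?_, fun I => ?_⟩
    · apply h2 (σ.symm x)
      rw [Equiv.eq_symm_apply]; exact hx
    · beta_reduce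
      rw [h3]
      congr 1
      rw [eq_iff_iff]
      constructor
      · intro h x; simpa using h (σ.symm x)
      · intro h x; simpa using h (σ x)

theorem tensorPow_orth {k : ℕ} (g : Matrix (Fin n) (Fin n) ℝ) (hg : g.transpose * g = 1) :
    tensorPow n k g * (tensorPow n k g).transpose = 1 := by
  have hg' : g * g.transpose = 1 := mul_eq_one_comm.mp hg
  have hgg : ∀ a b, ∑ c, g a c * g b c = if a = b then 1 else 0 := by
    intro a b
    have := congrFun (congrFun hg' a) b
    simpa only [Matrix.mul_apply, Matrix.transpose_apply, Matrix.one_apply] using this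
  ext I J
  simp only [Matrix.mul_apply, tensorPow, Matrix.transpose_apply, Matrix.of_apply,
    ← Finset.prod_mul_distrib]
  have hs := Finset.sum_prod_piFinset (Finset.univ : Finset (Fin n))
    (fun (x : Fin k) c => g (I x) c * g (J x) c)
  rw [Fintype.piFinset_univ] at hs
  rw [hs]
  simp only [hgg, Matrix.one_apply]
  by_cases h : I = J
  · simp [h]
  · obtain ⟨x, hx⟩ := Function.ne_iff.mp h
    rw [if_neg h]
    exact Finset.prod_eq_zero (Finset.mem_univ x) (if_neg hx)

end FFT

/-- every `O(n)`-equivariant linear map `(ℝⁿ)^{⊗k} → (ℝⁿ)^{⊗l}` lies in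
the `ℝ`-span of the maps `E_β := D_β`, `β` ranging over all perfect matchings of
`[l+k]` (encoded by fixed-point-free involutions); i.e. the map from the free vector
space on perfect matchings to `Hom_{O(n)}` is surjective. -/
theorem Ematrix_span (n k l : ℕ) (hn : 0 < n)
    (φ : Matrix (Fin l → Fin n) (Fin k → Fin n) ℝ)
    (hφ : ∀ g : Matrix (Fin n) (Fin n) ℝ, g.transpose * g = 1 →
      tensorPow n l g * φ = φ * tensorPow n k g) :
    φ ∈ Submodule.span ℝ
      {M : Matrix (Fin l → Fin n) (Fin k → Fin n) ℝ |
        ∃ (f : Fin (l + k) → Fin (l + k)) (hf : ∀ x, f (f x) = x),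
          (∀ x, f x ≠ x) ∧ M = Dmat n l k (matchingSetoid f hf)} := by
  
  let T : (Fin (l + k) → Fin n) → ℝ :=
    fun I => φ (fun x => I (Fin.castAdd k x)) (fun x => I (Fin.natAdd l x))
  have hTa : ∀ I J, T (Fin.append I J) = φ I J := by
    intro I J; simp [T]
  have hsum : ∀ F : (Fin (l + k) → Fin n) → ℝ, ∑ J, F J = ∑ I', ∑ J', F (Fin.append I' J') := by
    intro F
    rw [← Fintype.sum_prod_type']
    exact (Fintype.sum_equiv (Fin.appendEquiv l k) _ _ (fun _ => rfl)).symm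
  have hT : T ∈ FFT.Inv n (l + k) := by
    intro g hg I
    obtain ⟨I, J, rfl⟩ : ∃ A B, I = Fin.append A B :=
      ⟨_, _, (Fin.append_castAdd_natAdd (f := I)).symm⟩
    have h1 : tensorPow n l g * φ * (tensorPow n k g).transpose = φ := by
      rw [hφ g hg, Matrix.mul_assoc, FFT.tensorPow_orth g hg, Matrix.mul_one]
    rw [hTa, hsum]
    conv_rhs => rw [← h1]
    simp only [Matrix.mul_apply, tensorPow, Matrix.transpose_apply, Matrix.of_apply,
      Fin.prod_univ_add, Fin.append_left, Fin.append_right, hTa, Finset.sum_mul]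
    rw [Finset.sum_comm]
    refine Finset.sum_congr rfl fun _ _ => Finset.sum_congr rfl fun _ _ => by ring
  let Φ : ((Fin (l + k) → Fin n) → ℝ) →ₗ[ℝ] Matrix (Fin l → Fin n) (Fin k → Fin n) ℝ :=
    { toFun := fun S => Matrix.of fun I J => S (Fin.append I J)
      map_add' := fun _ _ => rfl
      map_smul' := fun _ _ => rfl }
  have hφT : φ = Φ T := by
    ext I J; exact (hTa I J).symm
  rw [hφT]
  have hmem := Submodule.mem_map_of_mem (f := Φ) (FFT.inv_span T hT)
  rw [Submodule.map_span] at hmem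
  refine Submodule.span_mono ?_ hmem
  rintro _ ⟨β, hβ, rfl⟩
  obtain ⟨f, h1, h2, h3⟩ := FFT.isM_match hβ
  refine ⟨f, h1, h2, ?_⟩
  ext I J
  show β (Fin.append I J) = _
  rw [h3]
  simp only [Dmat, Matrix.of_apply, matchingSetoid]
  congr 1
  rw [eq_iff_iff]
  constructor
  · rintro h x y (rfl | rfl)
    · rfl
    · exact h x
  · intro h x; exact h x (f x) (Or.inr rfl)
end
end

section
/- Every Sp(n)-equivariant linear map φ : (ℝⁿ)^{⊗k} → (ℝⁿ)^{⊗l} is an ℝ-linear combination of the maps F_β, where β ranges over all perfect matchings of [l+k]; equivalently, the linear map from the free ℝ-vector space on perfect matchings of [l+k] to Hom_{Sp(n)}((ℝⁿ)^{⊗k}, (ℝⁿ)^{⊗l}) sending β to F_β is surjective. -/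
open Classical
noncomputable section

/-- The Gram matrix `ε` of the standard symplectic form `Ω` on `ℝ^{2m}`, in the basis
ordered `1, 1′, …, m, m′`. -/
def eps (m : ℕ) : Matrix (Fin (2 * m)) (Fin (2 * m)) ℝ :=
  Matrix.of fun i j =>
    if i.val + 1 = j.val ∧ i.val % 2 = 0 then (1 : ℝ)
    else if j.val + 1 = i.val ∧ j.val % 2 = 0 then (-1 : ℝ) else 0

/-- The matrix `F_β : (ℝⁿ)^{⊗k} → (ℝⁿ)^{⊗l}` (`n = 2m`) associated to a perfect matching
`β` of `[l+k]` encoded by an involution `f`. -/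
def Fmat (m l k : ℕ) (f : Fin (l + k) → Fin (l + k)) :
    Matrix (Fin l → Fin (2 * m)) (Fin k → Fin (2 * m)) ℝ :=
  Matrix.of fun I J =>
    ∏ x ∈ Finset.univ.filter (fun x => x < f x),
      (if ((x : Fin (l + k)).val < l ↔ (f x).val < l)
        then eps m (Fin.append I J x) (Fin.append I J (f x))
        else (if Fin.append I J x = Fin.append I J (f x) then (1 : ℝ) else 0))

set_option linter.unusedSectionVars false
section core
variable {ι A : Type} [Fintype ι] [DecidableEq ι] [Fintype A] [DecidableEq A]

def eT (s : Finset ι) (a c : A) : ((ι → A) → ℝ) →ₗ[ℝ] ((ι → A) → ℝ) where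
  toFun T K := ∑ i ∈ s, if K i = a then T (Function.update K i c) else 0
  map_add' T U := by
    funext K
    simp only [Pi.add_apply, ← Finset.sum_add_distrib]
    refine Finset.sum_congr rfl fun i _ => ?_
    split_ifs <;> simp
  map_smul' r T := by
    funext K
    simp [Finset.mul_sum]

theorem eT_apply (s : Finset ι) (a c : A) (T : (ι → A) → ℝ) (K : ι → A) :
    eT s a c T K = ∑ i ∈ s, if K i = a then T (Function.update K i c) else 0 := rfl

theorem eT_adj (s : Finset ι) (a c : A) (T U : (ι → A) → ℝ) :
    ∑ K, eT s a c T K * U K = ∑ K, T K * eT s c a U K := by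
  simp only [eT_apply, Finset.sum_mul, Finset.mul_sum]
  rw [Finset.sum_comm]
  conv_rhs => rw [Finset.sum_comm]
  refine Finset.sum_congr rfl fun i _ => ?_
  simp only [ite_mul, zero_mul, mul_ite, mul_zero]
  rw [← Finset.sum_filter, ← Finset.sum_filter]
  refine Finset.sum_bij' (fun K _ => Function.update K i c) (fun K _ => Function.update K i a)
    ?_ ?_ ?_ ?_ ?_
  · intro K hK; simp
  · intro K hK; simp
  · intro K hK; simp at hK; simp [← hK]
  · intro K hK; simp at hK; simp [← hK]
  · intro K hK; simp at hK; simp [← hK]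

def CT (s : Finset ι) : ((ι → A) → ℝ) →ₗ[ℝ] ((ι → A) → ℝ) :=
  (∑ a : A, ∑ c : A, eT s c a ∘ₗ eT s a c) + (s.card : ℝ) • LinearMap.id

theorem CT_apply (s : Finset ι) (T : (ι → A) → ℝ) (K : ι → A) :
    CT s T K = (∑ a : A, ∑ c : A, eT s c a (eT s a c T) K) + s.card * T K := by
  simp [CT, LinearMap.sum_apply, Finset.sum_apply]

theorem CT_inj (s : Finset ι) (hs : s.Nonempty) :
    Function.Injective (CT s : ((ι → A) → ℝ) →ₗ[ℝ] ((ι → A) → ℝ)) := by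
  rw [← LinearMap.ker_eq_bot, LinearMap.ker_eq_bot']
  intro T hT
  have h0 : ∑ K, CT s T K * T K = 0 := by simp [hT]
  have h1 : ∑ K, CT s T K * T K =
      (∑ a : A, ∑ c : A, ∑ K, (eT s a c T K) ^ 2) + s.card * ∑ K, T K ^ 2 := by
    simp only [CT_apply, add_mul, Finset.sum_add_distrib, Finset.mul_sum]
    congr 1
    · simp only [Finset.sum_mul]
      rw [Finset.sum_comm]
      refine Finset.sum_congr rfl fun a _ => ?_
      rw [Finset.sum_comm]
      refine Finset.sum_congr rfl fun c _ => ?_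
      rw [eT_adj]
      exact Finset.sum_congr rfl fun K _ => by ring
    · exact Finset.sum_congr rfl fun K _ => by ring
  have h2 : 0 ≤ ∑ a : A, ∑ c : A, ∑ K, (eT s a c T K) ^ 2 :=
    Finset.sum_nonneg fun a _ => Finset.sum_nonneg fun c _ => Finset.sum_nonneg fun K _ =>
      sq_nonneg _
  have h3 : (0 : ℝ) < s.card := by exact_mod_cast hs.card_pos
  have h4 : 0 ≤ ∑ K, T K ^ 2 := Finset.sum_nonneg fun K _ => sq_nonneg _
  have h5 : ∑ K, T K ^ 2 = 0 := by nlinarith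
  funext K
  have := (Finset.sum_eq_zero_iff_of_nonneg (fun K _ => sq_nonneg (T K))).1 h5 K (Finset.mem_univ _)
  simpa using this

theorem update_swap (K : ι → A) (i j : ι) (h : i ≠ j) :
    Function.update (Function.update K i (K j)) j (K i) = K ∘ Equiv.swap i j := by
  funext x
  by_cases hj : x = j
  · subst hj; simp
  · by_cases hi : x = i
    · subst hi; simp [h]
    · simp [hi, hj, Equiv.swap_apply_of_ne_of_ne]

/-- double application of the elementary operators -/
theorem eT_eT (s : Finset ι) (a c b d : A) (T : (ι → A) → ℝ) (K : ι → A) :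
    eT s c a (eT s b d T) K =
      (∑ i ∈ s, if K i = c ∧ a = b then T (Function.update K i d) else 0) +
      ∑ i ∈ s, ∑ j ∈ s.erase i, if K i = c ∧ K j = b then
        T (Function.update (Function.update K i a) j d) else 0 := by
  simp only [eT_apply]
  rw [← Finset.sum_add_distrib]
  refine Finset.sum_congr rfl fun i hi => ?_
  by_cases hc : K i = c
  · simp only [hc, if_true, true_and]
    rw [← Finset.add_sum_erase s _ hi]
    congr 1
    · simp
    · refine Finset.sum_congr rfl fun j hj => ?_
      rw [Function.update_of_ne (Finset.ne_of_mem_erase hj)]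
  · simp [hc]

theorem CT_swap (s : Finset ι) (T : (ι → A) → ℝ) (K : ι → A) :
    CT s T K = (s.card * Fintype.card A + s.card : ℝ) * T K +
      ∑ i ∈ s, ∑ j ∈ s.erase i, T (K ∘ Equiv.swap i j) := by
  rw [CT_apply]
  simp only [eT_eT, and_true, Finset.sum_add_distrib]
  have h1 : ∑ a : A, ∑ c : A, ∑ i ∈ s,
      (if K i = c then T (Function.update K i c) else 0) =
      (s.card * Fintype.card A : ℝ) * T K := by
    have : ∑ c : A, ∑ i ∈ s,
      (if K i = c then T (Function.update K i c) else 0) = s.card * T K := by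
      rw [Finset.sum_comm]
      simp
    rw [this]
    simp; ring
  have h2 : ∑ a : A, ∑ c : A, ∑ i ∈ s, ∑ j ∈ s.erase i, (if K i = c ∧ K j = a then
        T (Function.update (Function.update K i a) j c) else 0) =
        ∑ i ∈ s, ∑ j ∈ s.erase i, T (K ∘ Equiv.swap i j) := by
    have : ∀ a : A, ∑ c : A, ∑ i ∈ s, ∑ j ∈ s.erase i, (if K i = c ∧ K j = a then
        T (Function.update (Function.update K i a) j c) else 0) =
        ∑ i ∈ s, ∑ j ∈ s.erase i, (if K j = a then
        T (Function.update (Function.update K i a) j (K i)) else 0) := by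
      intro a
      rw [Finset.sum_comm]
      refine Finset.sum_congr rfl fun i _ => ?_
      rw [Finset.sum_comm]
      refine Finset.sum_congr rfl fun j _ => ?_
      simp [ite_and]
    simp only [this]
    rw [Finset.sum_comm]
    refine Finset.sum_congr rfl fun i _ => ?_
    rw [Finset.sum_comm]
    refine Finset.sum_congr rfl fun j hj => ?_
    simp [update_swap K i j (Finset.ne_of_mem_erase hj).symm]
  rw [h1, h2]
  ring

def sgnForm (σ : A → A) (sg : A → ℝ) (a b : A) : ℝ := if b = σ a then sg a else 0

/-- contraction of sites `i, j` -/
def contr (σ : A → A) (sg : A → ℝ) (i j : ι) (T : (ι → A) → ℝ) (K : ι → A) : ℝ :=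
  ∑ a, sg a * T (Function.update (Function.update K i a) j (σ a))

/-- invariance under the symplectic Lie algebra -/
def SpInv (σ : A → A) (sg : A → ℝ) (s : Finset ι) (T : (ι → A) → ℝ) : Prop :=
  ∀ a c K, eT s a c T K = sg a * sg c * eT s (σ c) (σ a) T K

theorem CT_inv (σ : A → A) (sg : A → ℝ) (hσ : ∀ a, σ (σ a) = a) (h1 : ∀ a, sg a * sg a = 1)
    (h2 : ∀ a, sg (σ a) = - sg a) (s : Finset ι) (T : (ι → A) → ℝ) (hT : SpInv σ sg s T)
    (K : ι → A) :
    CT s T K = ∑ i ∈ s, ∑ j ∈ s.erase i, sgnForm σ sg (K i) (K j) * contr σ sg i j T K := by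
  rw [CT_apply]
  have h : ∀ a c : A, eT s c a (eT s a c T) K =
      sg a * sg c * eT s c a (eT s (σ c) (σ a) T) K := by
    intro a c
    have : eT s a c T = (sg a * sg c) • eT s (σ c) (σ a) T := by
      funext K; simpa using hT a c K
    rw [this, map_smul]; simp
  simp only [h, eT_eT, mul_add, Finset.sum_add_distrib]
  have e1 : ∑ a : A, ∑ c : A, sg a * sg c * ∑ i ∈ s,
      (if K i = c ∧ a = σ c then T (Function.update K i (σ a)) else 0) = - (s.card * T K) := by
    simp only [Finset.mul_sum]
    have : ∀ a : A, ∑ c : A, ∑ i ∈ s, sg a * sg c *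
      (if K i = c ∧ a = σ c then T (Function.update K i (σ a)) else 0) =
      ∑ i ∈ s, if a = σ (K i) then - T K else 0 := by
      intro a
      rw [Finset.sum_comm]
      refine Finset.sum_congr rfl fun i _ => ?_
      simp only [ite_and, mul_ite, mul_zero]
      rw [Finset.sum_ite_eq]
      simp only [Finset.mem_univ, if_true]
      split_ifs with ha
      · subst ha
        simp [hσ, h2, h1]
      · rfl
    simp only [this]
    rw [Finset.sum_comm]
    simp
  have e2 : ∑ a : A, ∑ c : A, sg a * sg c * ∑ i ∈ s, ∑ j ∈ s.erase i,
      (if K i = c ∧ K j = σ c then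
        T (Function.update (Function.update K i a) j (σ a)) else 0) =
      ∑ i ∈ s, ∑ j ∈ s.erase i, sgnForm σ sg (K i) (K j) * contr σ sg i j T K := by
    simp only [Finset.mul_sum]
    have : ∀ a : A, ∑ c : A, ∑ i ∈ s, ∑ j ∈ s.erase i, sg a * sg c *
      (if K i = c ∧ K j = σ c then
        T (Function.update (Function.update K i a) j (σ a)) else 0) =
      ∑ i ∈ s, ∑ j ∈ s.erase i, sgnForm σ sg (K i) (K j) *
        (sg a * T (Function.update (Function.update K i a) j (σ a))) := by
      intro a
      rw [Finset.sum_comm]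
      refine Finset.sum_congr rfl fun i _ => ?_
      rw [Finset.sum_comm]
      refine Finset.sum_congr rfl fun j _ => ?_
      simp only [ite_and, mul_ite, mul_zero]
      rw [Finset.sum_ite_eq]
      simp only [Finset.mem_univ, if_true, sgnForm]
      split_ifs <;> ring
    simp only [this]
    rw [Finset.sum_comm]
    refine Finset.sum_congr rfl fun i _ => ?_
    rw [Finset.sum_comm]
    refine Finset.sum_congr rfl fun j hj => ?_
    rw [contr, Finset.mul_sum]
  rw [e1, e2]
  ring

theorem contr_inv (σ : A → A) (sg : A → ℝ) (hσ : ∀ a, σ (σ a) = a) (h1 : ∀ a, sg a * sg a = 1)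
    (h2 : ∀ a, sg (σ a) = - sg a) (s : Finset ι) (T : (ι → A) → ℝ) (hT : SpInv σ sg s T)
    (i j : ι) (hi : i ∈ s) (hj : j ∈ s.erase i) :
    SpInv σ sg ((s.erase i).erase j) (contr σ sg i j T) := by
  have hji : j ≠ i := Finset.ne_of_mem_erase hj
  have key : ∀ p q K, ∑ a, sg a * eT s p q T (Function.update (Function.update K i a) j (σ a)) =
      eT ((s.erase i).erase j) p q (contr σ sg i j T) K +
      (sg p * T (Function.update (Function.update K i q) j (σ p)) -
       sg p * T (Function.update (Function.update K i (σ p)) j q)) := by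
    intro p q K
    simp only [eT_apply]
    have : ∀ a, sg a * ∑ r ∈ s, (if Function.update (Function.update K i a) j (σ a) r = p then
        T (Function.update (Function.update (Function.update K i a) j (σ a)) r q) else 0) =
        (if a = p then sg p * T (Function.update (Function.update K i q) j (σ p)) else 0) +
        (if a = σ p then - sg p * T (Function.update (Function.update K i (σ p)) j q) else 0) +
        ∑ r ∈ (s.erase i).erase j, if K r = p then sg a *
          T (Function.update (Function.update (Function.update K r q) i a) j (σ a)) else 0 := by
      intro a
      rw [← Finset.add_sum_erase s _ hi, ← Finset.add_sum_erase _ _ hj, mul_add, mul_add,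
        ← add_assoc]
      congr 1
      · congr 1
        · rw [Function.update_of_ne hji.symm, Function.update_self]
          split_ifs with h
          · subst h
            rw [Function.update_comm hji, Function.update_idem]
          · simp
        · rw [Function.update_self]
          have : (σ a = p) ↔ (a = σ p) := by
            constructor
            · intro h; rw [← h, hσ]
            · intro h; rw [h, hσ]
          simp only [this]
          split_ifs with h
          · subst h
            rw [Function.update_idem, h2]
          · simp
      · rw [Finset.mul_sum]
        refine Finset.sum_congr rfl fun r hr => ?_
        have hrj := Finset.ne_of_mem_erase hr
        have hri := Finset.ne_of_mem_erase (Finset.mem_of_mem_erase hr)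
        rw [Function.update_of_ne hrj, Function.update_of_ne hri, mul_ite, mul_zero,
          Function.update_comm hrj.symm, Function.update_comm hri.symm]
    simp only [this, Finset.sum_add_distrib]
    rw [Finset.sum_comm]
    simp only [Finset.sum_ite_eq', Finset.mem_univ, if_true]
    have : ∀ r, ∑ a, (if K r = p then sg a *
          T (Function.update (Function.update (Function.update K r q) i a) j (σ a)) else 0) =
          if K r = p then contr σ sg i j T (Function.update K r q) else 0 := by
      intro r
      split_ifs
      · rfl
      · simp
    simp only [this]
    ring
  intro p q K
  have k1 := key p q K
  have k2 := key (σ q) (σ p) K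
  have k3 : ∑ a, sg a * eT s p q T (Function.update (Function.update K i a) j (σ a)) =
      sg p * sg q * ∑ a, sg a * eT s (σ q) (σ p) T
        (Function.update (Function.update K i a) j (σ a)) := by
    rw [Finset.mul_sum]
    refine Finset.sum_congr rfl fun a _ => ?_
    rw [hT p q]
    ring
  rw [k1, k2] at k3
  simp only [hσ, h2] at k3
  linear_combination k3 + sg p * (T (Function.update (Function.update K i q) j (σ p)) - T (Function.update (Function.update K i (σ p)) j q)) * h1 q

inductive IsM (σ : A → A) (sg : A → ℝ) : Finset ι → ((ι → A) → ℝ) → Prop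
  | empty : IsM σ sg ∅ (fun _ => 1)
  | step (s : Finset ι) (P : (ι → A) → ℝ) (i j : ι) (hij : i ≠ j) (hi : i ∉ s) (hj : j ∉ s)
      (h : IsM σ sg s P) :
      IsM σ sg (insert i (insert j s)) (fun K => sgnForm σ sg (K i) (K j) * P K)

theorem IsM.perm {σ : A → A} {sg : A → ℝ} {s : Finset ι} {P : (ι → A) → ℝ} (h : IsM σ sg s P)
    (π : Equiv.Perm ι) : IsM σ sg (s.image π) (fun K => P (K ∘ π)) := by
  induction h with
  | empty => simpa using IsM.empty
  | step s P i j hij hi hj h ih =>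
    rw [Finset.image_insert, Finset.image_insert]
    exact IsM.step _ _ (π i) (π j) (by simpa using hij) (by simpa using hi) (by simpa using hj) ih

theorem image_swap (s : Finset ι) (i j : ι) (hi : i ∈ s) (hj : j ∈ s) :
    s.image (Equiv.swap i j) = s := by
  apply Finset.eq_of_subset_of_card_le
  · intro x hx
    obtain ⟨y, hy, rfl⟩ := Finset.mem_image.1 hx
    rw [Equiv.swap_apply_def]
    split_ifs <;> assumption
  · rw [Finset.card_image_of_injective _ (Equiv.injective _)]

theorem mem_of_inj {V : Type} [AddCommGroup V] [Module ℝ V] [FiniteDimensional ℝ V]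
    (L : V →ₗ[ℝ] V) (hL : Function.Injective L) (B : Submodule ℝ V) (hB : ∀ x ∈ B, L x ∈ B)
    (T : V) (hT : L T ∈ B) : T ∈ B := by
  have hs : Function.Surjective (L.restrict hB) := by
    apply LinearMap.surjective_of_injective
    intro x y hxy
    have := congrArg Subtype.val hxy
    exact Subtype.ext (hL this)
  obtain ⟨y, hy⟩ := hs ⟨L T, hT⟩
  have := hL (congrArg Subtype.val hy)
  rw [← this]
  exact y.2

theorem core (σ : A → A) (sg : A → ℝ) (hσ : ∀ a, σ (σ a) = a) (h1 : ∀ a, sg a * sg a = 1)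
    (h2 : ∀ a, sg (σ a) = - sg a) (N : ℕ) : ∀ (s : Finset ι), s.card = N →
    ∀ (T : (ι → A) → ℝ), (∀ K K' : ι → A, (∀ x ∈ s, K x = K' x) → T K = T K') →
      SpInv σ sg s T → T ∈ Submodule.span ℝ {P | IsM σ sg s P} := by
  induction N using Nat.strong_induction_on with
  | _ N ih =>
  intro s hs T hd hT
  rcases s.eq_empty_or_nonempty with rfl | hne
  · by_cases hA : Nonempty (ι → A)
    · obtain ⟨K0⟩ := hA
      have : T = T K0 • (fun _ => (1 : ℝ)) := by
        funext K
        simpa using hd K K0 (by simp)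
      rw [this]
      exact Submodule.smul_mem _ _ (Submodule.subset_span IsM.empty)
    · have : T = 0 := by
        funext K
        exact (hA ⟨K⟩).elim
      rw [this]
      exact Submodule.zero_mem _
  · refine mem_of_inj (CT s) (CT_inj s hne) _ ?_ T ?_
    · intro U hU
      induction hU using Submodule.span_induction with
      | mem P hP =>
        have : CT s P = (s.card * Fintype.card A + s.card : ℝ) • P +
            ∑ i ∈ s, ∑ j ∈ s.erase i, fun K => P (K ∘ Equiv.swap i j) := by
          funext K
          rw [CT_swap]
          simp [Finset.sum_apply]
        rw [this]
        refine Submodule.add_mem _ (Submodule.smul_mem _ _ (Submodule.subset_span hP)) ?_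
        refine Submodule.sum_mem _ fun i hi => Submodule.sum_mem _ fun j hj =>
          Submodule.subset_span ?_
        have := IsM.perm hP (Equiv.swap i j)
        rwa [image_swap s i j hi (Finset.mem_of_mem_erase hj)] at this
      | zero => simp
      | add x y _ _ hx hy => rw [map_add]; exact Submodule.add_mem _ hx hy
      | smul r x _ hx => rw [map_smul]; exact Submodule.smul_mem _ _ hx
    · have : CT s T = ∑ i ∈ s, ∑ j ∈ s.erase i,
          fun K => sgnForm σ sg (K i) (K j) * contr σ sg i j T K := by
        funext K
        rw [CT_inv σ sg hσ h1 h2 s T hT]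
        simp [Finset.sum_apply]
      rw [this]
      refine Submodule.sum_mem _ fun i hi => Submodule.sum_mem _ fun j hj => ?_
      have hji : j ≠ i := Finset.ne_of_mem_erase hj
      have hins : insert i (insert j ((s.erase i).erase j)) = s := by
        rw [Finset.insert_erase hj, Finset.insert_erase hi]
      have hc := ih ((s.erase i).erase j).card (by
          rw [← hs]
          exact lt_of_le_of_lt (Finset.card_le_card (Finset.erase_subset _ _))
            (Finset.card_erase_lt_of_mem hi)) _ rfl (contr σ sg i j T) (by
            intro K K' hK
            refine Finset.sum_congr rfl fun a _ => ?_
            congr 1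
            apply hd
            intro x hx
            by_cases hxj : x = j
            · subst hxj; simp
            · by_cases hxi : x = i
              · subst hxi; simp [hxj]
              · simp [hxi, hxj, hK x (by simp [hxi, hxj, hx])]) (contr_inv σ sg hσ h1 h2 s T hT i j hi hj)
      let m : ((ι → A) → ℝ) →ₗ[ℝ] ((ι → A) → ℝ) :=
        LinearMap.mulLeft ℝ (fun K : ι → A => sgnForm σ sg (K i) (K j))
      have hm : Submodule.map m (Submodule.span ℝ {P | IsM σ sg ((s.erase i).erase j) P}) ≤
          Submodule.span ℝ {P | IsM σ sg s P} := by
        rw [Submodule.map_span, Submodule.span_le]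
        rintro _ ⟨P, hP, rfl⟩
        apply Submodule.subset_span
        have := IsM.step _ P i j hji.symm (by simp) (by simp) hP
        rw [hins] at this
        exact this
      exact hm ⟨_, hc, rfl⟩
end core

theorem sgnForm_anti {A : Type} [DecidableEq A] (σ : A → A) (sg : A → ℝ) (hσ : ∀ a, σ (σ a) = a)
    (h2 : ∀ a, sg (σ a) = - sg a) (a b : A) : sgnForm σ sg b a = - sgnForm σ sg a b := by
  unfold sgnForm
  have : (a = σ b) ↔ (b = σ a) := by
    constructor <;> (intro h; rw [h, hσ])
  simp only [this]
  split_ifs with h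
  · rw [h, h2]
  · simp

theorem IsM.to_invol {ι A : Type} [Fintype ι] [LinearOrder ι] [Fintype A] [DecidableEq A]
    (σ : A → A) (sg : A → ℝ) (hσ : ∀ a, σ (σ a) = a)
    (h2 : ∀ a, sg (σ a) = - sg a) {s : Finset ι} {P : (ι → A) → ℝ} (h : IsM σ sg s P) :
    ∃ (f : ι → ι) (r : ℝ), (∀ x ∈ s, f x ∈ s ∧ f (f x) = x ∧ f x ≠ x) ∧
      ∀ K, P K = r * ∏ x ∈ s.filter (fun x => x < f x), sgnForm σ sg (K x) (K (f x)) := by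
  induction h with
  | empty => exact ⟨id, 1, by simp, by simp⟩
  | step s P i j hij hi hj h ih =>
    obtain ⟨f, r, hf, hP⟩ := ih
    let f' : ι → ι := fun x => if x = i then j else if x = j then i else f x
    have fi : f' i = j := by simp [f']
    have fj : f' j = i := by simp [f', hij.symm]
    have fs : ∀ x ∈ s, f' x = f x := by
      intro x hx
      have h1 : x ≠ i := fun h => hi (h ▸ hx)
      have h2 : x ≠ j := fun h => hj (h ▸ hx)
      simp [f', h1, h2]
    have hprod : ∀ K : ι → A, ∏ x ∈ s.filter (fun x => x < f' x), sgnForm σ sg (K x) (K (f' x)) =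
        ∏ x ∈ s.filter (fun x => x < f x), sgnForm σ sg (K x) (K (f x)) := by
      intro K
      rw [Finset.filter_congr (fun x hx => by rw [fs x hx])]
      exact Finset.prod_congr rfl fun x hx => by rw [fs x (Finset.mem_filter.1 hx).1]
    refine ⟨f', if i < j then r else -r, ?_, ?_⟩
    · intro x hx
      rcases Finset.mem_insert.1 hx with rfl | hx
      · rw [fi, fj]; simp [hij.symm]
      · rcases Finset.mem_insert.1 hx with rfl | hx
        · rw [fj, fi]; simp [hij]
        · obtain ⟨a, b, c⟩ := hf x hx
          rw [fs x hx, fs _ a]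
          exact ⟨by simp [a], b, c⟩
    · intro K
      show sgnForm σ sg (K i) (K j) * P K = _
      rw [hP, ← hprod K]
      rcases lt_or_gt_of_ne hij with hlt | hlt
      · simp only [Finset.filter_insert, fi, fj, if_pos hlt, if_neg hlt.not_gt]
        rw [Finset.prod_insert (by simp [hi]), fi]
        ring
      · simp only [Finset.filter_insert, fi, fj, if_pos hlt, if_neg hlt.not_gt]
        rw [Finset.prod_insert (by simp [hj]), fj,
          sgnForm_anti σ sg hσ h2 (K i) (K j)]
        ring

theorem sum_update {k : ℕ} {A : Type} [Fintype A] [DecidableEq A] (X : Matrix A A ℝ)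
    (ψ : (Fin k → A) → ℝ) (I : Fin k → A) (i : Fin k) :
    ∑ J : Fin k → A, ((∏ j ∈ Finset.univ.erase i, (1 : Matrix A A ℝ) (I j) (J j)) * X (I i) (J i))
      * ψ J = ∑ q, X (I i) q * ψ (Function.update I i q) := by
  symm
  refine Finset.sum_of_injOn (fun q => Function.update I i q) ?_ ?_ ?_ ?_
  · intro p _ q _ h
    simpa using congrFun h i
  · intro p _; simp
  · intro J _ hJ
    have : ∃ j ∈ Finset.univ.erase i, I j ≠ J j := by
      by_contra hcon
      push Not at hcon
      apply hJ
      refine ⟨J i, by simp, ?_⟩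
      funext j
      by_cases hj : j = i
      · subst hj; simp
      · simp [hj, hcon j (by simp [hj])]
    obtain ⟨j, hj, hne⟩ := this
    have hz : (1 : Matrix A A ℝ) (I j) (J j) = 0 := Matrix.one_apply_ne hne
    have hp : ∏ j ∈ Finset.univ.erase i, (1 : Matrix A A ℝ) (I j) (J j) = 0 :=
      Finset.prod_eq_zero hj hz
    rw [hp]
    simp
  · intro q _
    have : ∏ j ∈ Finset.univ.erase i, (1 : Matrix A A ℝ) (I j) (Function.update I i q j) = 1 := by
      refine Finset.prod_eq_one fun j hj => ?_
      rw [Function.update_of_ne (Finset.ne_of_mem_erase hj), Matrix.one_apply_eq]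
    simp [this]

theorem deriv_tensor {k : ℕ} {A : Type} [Fintype A] [DecidableEq A] (X : Matrix A A ℝ)
    (ψ : (Fin k → A) → ℝ) (I : Fin k → A) :
    HasDerivAt (fun t : ℝ => ∑ J : Fin k → A, (∏ i, (1 + t • X) (I i) (J i)) * ψ J)
      (∑ i, ∑ q, X (I i) q * ψ (Function.update I i q)) 0 := by
  have h : ∀ J : Fin k → A, HasDerivAt (fun t : ℝ => (∏ i, (1 + t • X) (I i) (J i)) * ψ J)
      ((∑ i, (∏ j ∈ Finset.univ.erase i, (1 : Matrix A A ℝ) (I j) (J j)) * X (I i) (J i)) * ψ J)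
      0 := by
    intro J
    refine HasDerivAt.mul_const ?_ _
    have := HasDerivAt.fun_finsetProd (u := Finset.univ) (x := (0 : ℝ))
      (f := fun (i : Fin k) (t : ℝ) => (1 + t • X) (I i) (J i)) (f' := fun i => X (I i) (J i)) (by
        intro i _
        have h1 : HasDerivAt (fun t : ℝ => (1 : Matrix A A ℝ) (I i) (J i) + t * X (I i) (J i))
            (1 * X (I i) (J i)) 0 :=
          ((hasDerivAt_id (0 : ℝ)).mul_const (X (I i) (J i))).const_add _
        simpa using h1)
    simpa using this
  have h2 := HasDerivAt.fun_sum (u := Finset.univ) (fun J _ => h J)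
  refine h2.congr_deriv ?_
  have h3 : ∀ J : Fin k → A, (∑ i, (∏ j ∈ Finset.univ.erase i, (1 : Matrix A A ℝ) (I j) (J j)) *
      X (I i) (J i)) * ψ J = ∑ i, (∏ j ∈ Finset.univ.erase i, (1 : Matrix A A ℝ) (I j) (J j)) *
      X (I i) (J i) * ψ J := fun J => Finset.sum_mul _ _ _
  rw [Finset.sum_congr rfl fun J _ => h3 J, Finset.sum_comm]
  exact Finset.sum_congr rfl fun i _ => sum_update X ψ I i

def infL {A : Type} [Fintype A] [DecidableEq A] {l k : ℕ}
    (φ : Matrix (Fin l → A) (Fin k → A) ℝ) (X : Matrix A A ℝ) (I : Fin l → A) (J : Fin k → A) : ℝ :=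
  (∑ i, ∑ q, X (I i) q * φ (Function.update I i q) J) -
    ∑ j, ∑ q, X q (J j) * φ I (Function.update J j q)

theorem infL_zero {n l k : ℕ} (φ : Matrix (Fin l → Fin n) (Fin k → Fin n) ℝ)
    (X : Matrix (Fin n) (Fin n) ℝ)
    (h : ∀ t : ℝ, tensorPow n l (1 + t • X) * φ = φ * tensorPow n k (1 + t • X))
    (I : Fin l → Fin n) (J : Fin k → Fin n) : infL φ X I J = 0 := by
  have h1 := deriv_tensor X (fun I' => φ I' J) I
  have h2 := deriv_tensor X.transpose (fun J' => φ I J') J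
  have h3 : (fun t : ℝ => ∑ I' : Fin l → Fin n, (∏ i, (1 + t • X) (I i) (I' i)) * φ I' J) =
      (fun t : ℝ => ∑ J' : Fin k → Fin n, (∏ i, (1 + t • X.transpose) (J i) (J' i)) * φ I J') := by
    funext t
    have := congrFun (congrFun (h t) I) J
    simp only [Matrix.mul_apply, tensorPow, Matrix.of_apply] at this
    rw [this]
    refine Finset.sum_congr rfl fun J' _ => ?_
    rw [mul_comm]
    congr 1
    refine Finset.prod_congr rfl fun i _ => ?_
    simp [Matrix.one_apply, eq_comm]
  rw [h3] at h1
  have := h1.unique h2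
  unfold infL
  rw [this]
  simp

theorem transv {n : ℕ} (E : Matrix (Fin n) (Fin n) ℝ) (hE : E.transpose = -E)
    (v : Fin n → ℝ) (t : ℝ) :
    (1 + t • Matrix.vecMulVec v (Matrix.vecMul v E)).transpose * E *
      (1 + t • Matrix.vecMulVec v (Matrix.vecMul v E)) = E := by
  have hv : Matrix.mulVec E v = - Matrix.vecMul v E := by
    rw [← Matrix.vecMul_transpose, hE, Matrix.vecMul_neg]
  have h0 : Matrix.vecMul v E ⬝ᵥ v = 0 := by
    have h1 : v ⬝ᵥ Matrix.mulVec E v = Matrix.vecMul v E ⬝ᵥ v := Matrix.dotProduct_mulVec _ _ _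
    rw [hv, dotProduct_neg, dotProduct_comm] at h1
    linarith
  have hXX : Matrix.vecMulVec v (Matrix.vecMul v E) * Matrix.vecMulVec v (Matrix.vecMul v E) = 0 := by
    rw [Matrix.vecMulVec_mul_vecMulVec, h0, zero_smul, Matrix.vecMulVec_zero]
  have hXE : (Matrix.vecMulVec v (Matrix.vecMul v E)).transpose * E =
      - (E * Matrix.vecMulVec v (Matrix.vecMul v E)) := by
    rw [Matrix.transpose_vecMulVec, Matrix.vecMulVec_mul, Matrix.mul_vecMulVec, hv,
      Matrix.neg_vecMulVec, neg_neg]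
  generalize Matrix.vecMulVec v (Matrix.vecMul v E) = X at *
  rw [Matrix.transpose_add, Matrix.transpose_one, Matrix.transpose_smul, add_mul, Matrix.one_mul,
    Matrix.smul_mul, hXE, mul_add, Matrix.mul_one, Matrix.mul_smul, add_mul, Matrix.smul_mul,
    Matrix.neg_mul, Matrix.mul_assoc, hXX]
  simp

theorem infL_ab {n l k : ℕ} (E : Matrix (Fin n) (Fin n) ℝ) (hE : E.transpose = -E)
    (φ : Matrix (Fin l → Fin n) (Fin k → Fin n) ℝ)
    (hφ : ∀ g : Matrix (Fin n) (Fin n) ℝ, g.transpose * E * g = E →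
      tensorPow n l g * φ = φ * tensorPow n k g) (a b : Fin n) (I : Fin l → Fin n)
      (J : Fin k → Fin n) :
    infL φ (Matrix.of fun p q => (if p = a then E b q else 0) + (if p = b then E a q else 0)) I J
      = 0 := by
  have hv : ∀ v : Fin n → ℝ, infL φ (Matrix.vecMulVec v (Matrix.vecMul v E)) I J = 0 :=
    fun v => infL_zero φ _ (fun t => hφ _ (transv E hE v t)) I J
  have hsub : ∀ X Y : Matrix (Fin n) (Fin n) ℝ, infL φ (X - Y) I J = infL φ X I J - infL φ Y I J := by
    intro X Y
    simp only [infL, Matrix.sub_apply, sub_mul, Finset.sum_sub_distrib]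
    ring
  have : (Matrix.of fun p q => (if p = a then E b q else 0) + (if p = b then E a q else 0)) =
      Matrix.vecMulVec (Pi.single a 1 + Pi.single b 1)
        (Matrix.vecMul (Pi.single a 1 + Pi.single b 1) E) -
      Matrix.vecMulVec (Pi.single a 1) (Matrix.vecMul (Pi.single a 1) E) -
      Matrix.vecMulVec (Pi.single b 1) (Matrix.vecMul (Pi.single b 1) E) := by
    ext p q
    simp only [Matrix.of_apply, Matrix.sub_apply, Matrix.vecMulVec_apply, Matrix.add_vecMul,
      Matrix.single_one_vecMul, Pi.add_apply, Pi.single_apply, Matrix.row_apply]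
    split_ifs <;> ring
  rw [this, hsub, hsub, hv, hv, hv]
  simp

def toT {A : Type} {l k : ℕ} (σ : A → A) (sg : A → ℝ)
    (φ : Matrix (Fin l → A) (Fin k → A) ℝ) (K : Fin (l + k) → A) : ℝ :=
  (∏ y : Fin k, sg (K (Fin.natAdd l y))) *
    φ (fun i => K (Fin.castAdd k i)) (fun y => σ (K (Fin.natAdd l y)))

theorem toT_inv {n l k : ℕ} (σ : Fin n → Fin n) (sg : Fin n → ℝ) (hσ : ∀ a, σ (σ a) = a)
    (h1 : ∀ a, sg a * sg a = 1) (h2 : ∀ a, sg (σ a) = - sg a)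
    (φ : Matrix (Fin l → Fin n) (Fin k → Fin n) ℝ)
    (hφ : ∀ g : Matrix (Fin n) (Fin n) ℝ,
      g.transpose * Matrix.of (sgnForm σ sg) * g = Matrix.of (sgnForm σ sg) →
      tensorPow n l g * φ = φ * tensorPow n k g) :
    SpInv σ sg Finset.univ (toT σ sg φ) := by
  have hinj : ∀ a b, σ a = σ b ↔ a = b := fun a b =>
    ⟨fun h => by rw [← hσ a, h, hσ], fun h => by rw [h]⟩
  have hflip : ∀ a b, a = σ b ↔ σ a = b := fun a b =>
    ⟨fun h => by rw [h, hσ], fun h => by rw [← h, hσ]⟩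
  have hE : (Matrix.of (sgnForm σ sg)).transpose = - Matrix.of (sgnForm σ sg) := by
    ext a b
    simpa using sgnForm_anti σ sg hσ h2 a b
  have key : ∀ a c K, eT Finset.univ a c (toT σ sg φ) K =
      (∏ y : Fin k, sg (K (Fin.natAdd l y))) *
      ((∑ i : Fin l, if K (Fin.castAdd k i) = a then
        φ (Function.update (fun i => K (Fin.castAdd k i)) i c)
          (fun y => σ (K (Fin.natAdd l y))) else 0) +
       sg a * sg c * ∑ j : Fin k, if K (Fin.natAdd l j) = a then
        φ (fun i => K (Fin.castAdd k i))
          (Function.update (fun y => σ (K (Fin.natAdd l y))) j (σ c)) else 0) := by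
    intro a c K
    rw [eT_apply, Fin.sum_univ_add, mul_add, Finset.mul_sum, Finset.mul_sum, Finset.mul_sum]
    congr 1
    · refine Finset.sum_congr rfl fun i _ => ?_
      split_ifs with h
      · unfold toT
        congr 1
        · refine Finset.prod_congr rfl fun y _ => ?_
          rw [Function.update_of_ne]
          intro h; have := congrArg Fin.val h; simp at this; omega
        · congr 1
          · funext i'
            by_cases hi : i' = i
            · subst hi; simp
            · rw [Function.update_of_ne hi, Function.update_of_ne (by simpa using hi)]
          · funext y
            rw [Function.update_of_ne]
            intro h; have := congrArg Fin.val h; simp at this; omega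
      · simp
    · refine Finset.sum_congr rfl fun j _ => ?_
      split_ifs with h
      · unfold toT
        have e1 : (fun i => Function.update K (Fin.natAdd l j) c (Fin.castAdd k i)) =
            fun i => K (Fin.castAdd k i) := by
          funext i
          rw [Function.update_of_ne]
          intro h; have := congrArg Fin.val h; simp at this; omega
        have e2 : (fun y => σ (Function.update K (Fin.natAdd l j) c (Fin.natAdd l y))) =
            Function.update (fun y => σ (K (Fin.natAdd l y))) j (σ c) := by
          funext y
          by_cases hy : y = j
          · subst hy; simp
          · rw [Function.update_of_ne hy, Function.update_of_ne (by simpa using hy)]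
        have e3 : ∏ y, sg (Function.update K (Fin.natAdd l j) c (Fin.natAdd l y)) =
            sg a * sg c * ∏ y, sg (K (Fin.natAdd l y)) := by
          rw [← Finset.mul_prod_erase Finset.univ _ (Finset.mem_univ j),
            ← Finset.mul_prod_erase Finset.univ (fun y => sg (K (Fin.natAdd l y)))
              (Finset.mem_univ j)]
          have : ∏ y ∈ Finset.univ.erase j,
              sg (Function.update K (Fin.natAdd l j) c (Fin.natAdd l y)) =
              ∏ y ∈ Finset.univ.erase j, sg (K (Fin.natAdd l y)) := by
            refine Finset.prod_congr rfl fun y hy => ?_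
            rw [Function.update_of_ne (by simpa using Finset.ne_of_mem_erase hy)]
          rw [this, Function.update_self]
          simp only [h]
          linear_combination (- sg c * ∏ y ∈ Finset.univ.erase j, sg (K (Fin.natAdd l y))) * h1 a
        rw [e1, e2, e3]
        ring
      · simp
  intro a c K
  rw [key, key]
  have hL := infL_ab _ hE φ hφ a (σ c) (fun i => K (Fin.castAdd k i))
    (fun y => σ (K (Fin.natAdd l y)))
  simp only [infL, Matrix.of_apply, sgnForm, add_mul, ite_mul, zero_mul, Finset.sum_add_distrib,
    hσ, hinj, h2, ← ite_and] at hL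
  have t1 : ∀ i : Fin l, (∑ q, if K (Fin.castAdd k i) = a ∧ q = c then
      -sg c * φ (Function.update (fun i => K (Fin.castAdd k i)) i q)
        (fun y => σ (K (Fin.natAdd l y))) else 0) = - sg c * if K (Fin.castAdd k i) = a then
      φ (Function.update (fun i => K (Fin.castAdd k i)) i c)
        (fun y => σ (K (Fin.natAdd l y))) else 0 := by
    intro i; split_ifs with h <;> simp [h]
  have t2 : ∀ i : Fin l, (∑ q, if K (Fin.castAdd k i) = σ c ∧ q = σ a then
      sg a * φ (Function.update (fun i => K (Fin.castAdd k i)) i q)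
        (fun y => σ (K (Fin.natAdd l y))) else 0) = sg a * if K (Fin.castAdd k i) = σ c then
      φ (Function.update (fun i => K (Fin.castAdd k i)) i (σ a))
        (fun y => σ (K (Fin.natAdd l y))) else 0 := by
    intro i; split_ifs with h <;> simp [h]
  have t3 : ∀ j : Fin k, (∑ q, if q = a ∧ σ (K (Fin.natAdd l j)) = c then
      -sg c * φ (fun i => K (Fin.castAdd k i))
        (Function.update (fun y => σ (K (Fin.natAdd l y))) j q) else 0) =
      - sg c * if K (Fin.natAdd l j) = σ c then φ (fun i => K (Fin.castAdd k i))
        (Function.update (fun y => σ (K (Fin.natAdd l y))) j a) else 0 := by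
    intro j
    by_cases h : σ (K (Fin.natAdd l j)) = c
    · have h' := (hflip _ _).2 h
      rw [if_pos h']
      simp [h]
    · have h' : ¬ K (Fin.natAdd l j) = σ c := fun hh => h ((hflip _ _).1 hh)
      rw [if_neg h']
      simp [h]
  have t4 : ∀ j : Fin k, (∑ q, if q = σ c ∧ K (Fin.natAdd l j) = a then
      sg a * φ (fun i => K (Fin.castAdd k i))
        (Function.update (fun y => σ (K (Fin.natAdd l y))) j q) else 0) =
      sg a * if K (Fin.natAdd l j) = a then φ (fun i => K (Fin.castAdd k i))
        (Function.update (fun y => σ (K (Fin.natAdd l y))) j (σ c)) else 0 := by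
    intro j; split_ifs with h <;> simp [h]
  simp only [t1, t2, t3, t4, ← Finset.mul_sum] at hL
  simp only [h2, hσ]
  generalize (∑ i : Fin l, if K (Fin.castAdd k i) = a then
      φ (Function.update (fun i => K (Fin.castAdd k i)) i c)
        (fun y => σ (K (Fin.natAdd l y))) else 0) = S1 at *
  generalize (∑ i : Fin l, if K (Fin.castAdd k i) = σ c then
      φ (Function.update (fun i => K (Fin.castAdd k i)) i (σ a))
        (fun y => σ (K (Fin.natAdd l y))) else 0) = S2 at *
  generalize (∑ j : Fin k, if K (Fin.natAdd l j) = σ c then φ (fun i => K (Fin.castAdd k i))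
        (Function.update (fun y => σ (K (Fin.natAdd l y))) j a) else 0) = S3 at *
  generalize (∑ j : Fin k, if K (Fin.natAdd l j) = a then φ (fun i => K (Fin.castAdd k i))
        (Function.update (fun y => σ (K (Fin.natAdd l y))) j (σ c)) else 0) = S4 at *
  generalize (∏ y : Fin k, sg (K (Fin.natAdd l y))) = w at *
  have e : S1 + sg a * sg c * S4 = sg a * sg c * S2 + S3 := by
    linear_combination (-sg c) * hL + (S3 - S1) * h1 c
  linear_combination w * e - w * S3 * (h1 a * (sg c * sg c) + h1 c)

def backL {A : Type} {l k : ℕ} (σ : A → A) (sg : A → ℝ) :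
    ((Fin (l + k) → A) → ℝ) →ₗ[ℝ] Matrix (Fin l → A) (Fin k → A) ℝ where
  toFun T := Matrix.of fun I J => (∏ y, sg (J y)) * T (Fin.append I (fun y => σ (J y)))
  map_add' T U := by ext I J; simp [mul_add]
  map_smul' r T := by ext I J; simp; ring

theorem prod_pairs {N : ℕ} (f : Fin N → Fin N) (hf : ∀ x, f (f x) = x) (hn : ∀ x, f x ≠ x)
    (w : Fin N → ℝ) :
    ∏ x, w x = ∏ x ∈ Finset.univ.filter (fun x => x < f x), (w x * w (f x)) := by
  rw [Finset.prod_mul_distrib,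
    ← Finset.prod_filter_mul_prod_filter_not Finset.univ (fun x => x < f x) w]
  congr 1
  refine Finset.prod_bij' (fun x _ => f x) (fun x _ => f x) ?_ ?_ ?_ ?_ ?_
  · intro x hx
    simp only [Finset.mem_filter, Finset.mem_univ, true_and] at hx ⊢
    rw [hf]
    exact lt_of_le_of_ne (not_lt.1 hx) (hn x)
  · intro x hx
    simp only [Finset.mem_filter, Finset.mem_univ, true_and] at hx ⊢
    rw [hf]
    exact hx.not_gt
  · intro x _; exact hf x
  · intro x _; exact hf x
  · intro x _; rw [hf]

def sigF (m : ℕ) (a : Fin (2 * m)) : Fin (2 * m) :=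
  if h : a.val % 2 = 0 then ⟨a.val + 1, by omega⟩ else ⟨a.val - 1, by omega⟩

def sgF (m : ℕ) (a : Fin (2 * m)) : ℝ := if a.val % 2 = 0 then 1 else -1

theorem sigF_val (m : ℕ) (a : Fin (2 * m)) :
    (sigF m a).val = if a.val % 2 = 0 then a.val + 1 else a.val - 1 := by
  unfold sigF
  split_ifs <;> rfl

theorem sigF_sigF (m : ℕ) (a : Fin (2 * m)) : sigF m (sigF m a) = a := by
  ext
  rw [sigF_val, sigF_val]
  split_ifs <;> omega

theorem sgF_sq (m : ℕ) (a : Fin (2 * m)) : sgF m a * sgF m a = 1 := by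
  unfold sgF; split_ifs <;> norm_num

theorem sgF_sigF (m : ℕ) (a : Fin (2 * m)) : sgF m (sigF m a) = - sgF m a := by
  unfold sgF sigF
  by_cases h : a.val % 2 = 0
  · have : ¬ ((a.val + 1) % 2 = 0) := by omega
    simp [h, this]
  · have : ((a.val - 1) % 2 = 0) := by omega
    rw [dif_neg h, if_neg h, if_pos this]
    norm_num

theorem eps_eq (m : ℕ) : eps m = Matrix.of (sgnForm (sigF m) (sgF m)) := by
  ext a b
  simp only [eps, Matrix.of_apply, sgnForm, sgF, Fin.ext_iff, sigF_val]
  split_ifs <;> first | rfl | omega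

theorem back_Fmat (m l k : ℕ) (f : Fin (l + k) → Fin (l + k)) (hf : ∀ x, f (f x) = x)
    (hn : ∀ x, f x ≠ x) (I : Fin l → Fin (2 * m)) (J : Fin k → Fin (2 * m)) :
    (∏ y, sgF m (J y)) * ∏ x ∈ Finset.univ.filter (fun x => x < f x),
      sgnForm (sigF m) (sgF m) (Fin.append I (fun y => sigF m (J y)) x)
        (Fin.append I (fun y => sigF m (J y)) (f x)) = Fmat m l k f I J := by
  have hw : ∏ y, sgF m (J y) = ∏ x : Fin (l + k), (if x.val < l then 1 else
      sgF m (Fin.append I J x)) := by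
    rw [Fin.prod_univ_add]
    simp
  have top : ∀ x : Fin (l + k), x.val < l →
      Fin.append I (fun y => sigF m (J y)) x = Fin.append I J x := by
    intro x
    induction x using Fin.addCases with
    | left i => simp
    | right j => simp
  have bot : ∀ x : Fin (l + k), ¬ x.val < l →
      Fin.append I (fun y => sigF m (J y)) x = sigF m (Fin.append I J x) := by
    intro x
    induction x using Fin.addCases with
    | left i => simp
    | right j => simp
  rw [hw, prod_pairs f hf hn, ← Finset.prod_mul_distrib]
  simp only [Fmat, Matrix.of_apply]
  refine Finset.prod_congr rfl fun x hx => ?_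
  have hx : x.val < (f x).val := (Finset.mem_filter.1 hx).2
  have hinj : ∀ a b, sigF m a = sigF m b ↔ a = b := fun a b =>
    ⟨fun h => by rw [← sigF_sigF m a, h, sigF_sigF], fun h => by rw [h]⟩
  rw [eps_eq, Matrix.of_apply]
  by_cases h1 : x.val < l
  · by_cases h2 : (f x).val < l
    · simp [h1, h2, top]
    · simp only [h1, h2, if_true, if_false, top x h1, bot _ h2, sgnForm, hinj, one_mul, true_iff,
        @eq_comm _ (Fin.append I J (f x))]
      split_ifs with h
      · rw [← h, sgF_sq]
      · simp
  · have h2 : ¬ (f x).val < l := by omega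
    simp only [h1, h2, if_false, bot x h1, bot _ h2, sgnForm, hinj, iff_self, if_true]
    split_ifs with h
    · rw [h, sgF_sigF]
      linear_combination sgF m (Fin.append I J x) * sgF_sq m (Fin.append I J x)
    · simp

/-- every `Sp(n)`-equivariant linear map `(ℝⁿ)^{⊗k} → (ℝⁿ)^{⊗l}` (`n = 2m`)
lies in the `ℝ`-span of the maps `F_β`, `β` ranging over all perfect matchings of `[l+k]`
(encoded by fixed-point-free involutions); i.e. the map from the free vector space on
perfect matchings to `Hom_{Sp(n)}` is surjective. -/
theorem Fmat_span (m k l : ℕ) (hm : 0 < m)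
    (φ : Matrix (Fin l → Fin (2 * m)) (Fin k → Fin (2 * m)) ℝ)
    (hφ : ∀ g : Matrix (Fin (2 * m)) (Fin (2 * m)) ℝ, g.transpose * eps m * g = eps m →
      tensorPow (2 * m) l g * φ = φ * tensorPow (2 * m) k g) :
    φ ∈ Submodule.span ℝ
      {M : Matrix (Fin l → Fin (2 * m)) (Fin k → Fin (2 * m)) ℝ |
        ∃ f : Fin (l + k) → Fin (l + k),
          (∀ x, f (f x) = x) ∧ (∀ x, f x ≠ x) ∧ M = Fmat m l k f} := by

  have hσ := sigF_sigF m
  have h1 := sgF_sq m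
  have h2 := sgF_sigF m
  rw [eps_eq] at hφ
  have hT := toT_inv (sigF m) (sgF m) hσ h1 h2 φ hφ
  have hc := core (sigF m) (sgF m) hσ h1 h2 _ Finset.univ rfl (toT (sigF m) (sgF m) φ)
    (fun K K' h => by rw [show K = K' from funext fun x => h x (Finset.mem_univ x)]) hT
  have hback : φ = ((-1 : ℝ) ^ k) • backL (sigF m) (sgF m) (toT (sigF m) (sgF m) φ) := by
    ext I J
    have e : (∏ y, sgF m (J y)) * ∏ y, sgF m (sigF m (J y)) = (-1 : ℝ) ^ k := by
      rw [← Finset.prod_mul_distrib]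
      have : ∀ y, sgF m (J y) * sgF m (sigF m (J y)) = -1 := by
        intro y; rw [h2]; linear_combination - h1 (J y)
      simp [this]
    have e2 : ((-1 : ℝ) ^ k) * (-1) ^ k = 1 := by
      rw [← mul_pow]; norm_num
    simp only [backL, toT, LinearMap.coe_mk, AddHom.coe_mk, Matrix.smul_apply, Matrix.of_apply,
      Fin.append_left, Fin.append_right, hσ, smul_eq_mul]
    linear_combination (- φ I J) * e2 - (-1 : ℝ) ^ k * φ I J * e
  rw [hback]
  refine Submodule.smul_mem _ _ ?_
  have hm : Submodule.map (backL (sigF m) (sgF m))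
      (Submodule.span ℝ {P : (Fin (l + k) → Fin (2 * m)) → ℝ |
        IsM (sigF m) (sgF m) Finset.univ P}) ≤
      Submodule.span ℝ
      {M : Matrix (Fin l → Fin (2 * m)) (Fin k → Fin (2 * m)) ℝ |
        ∃ f : Fin (l + k) → Fin (l + k),
          (∀ x, f (f x) = x) ∧ (∀ x, f x ≠ x) ∧ M = Fmat m l k f} := by
    rw [Submodule.map_span, Submodule.span_le]
    rintro _ ⟨P, hP, rfl⟩
    obtain ⟨f, r, hf, hPK⟩ := IsM.to_invol (sigF m) (sgF m) hσ h2 hP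
    have hf1 : ∀ x, f (f x) = x := fun x => (hf x (Finset.mem_univ x)).2.1
    have hf2 : ∀ x, f x ≠ x := fun x => (hf x (Finset.mem_univ x)).2.2
    have : backL (sigF m) (sgF m) P = r • Fmat m l k f := by
      ext I J
      rw [Matrix.smul_apply, ← back_Fmat m l k f hf1 hf2]
      simp only [backL, LinearMap.coe_mk, AddHom.coe_mk, Matrix.of_apply, hPK, smul_eq_mul]
      ring
    rw [this]
    exact Submodule.smul_mem _ _ (Submodule.subset_span ⟨f, hf1, hf2, rfl⟩)
  exact hm ⟨_, hc, rfl⟩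
end
end

section
/- Every SO(n)-equivariant linear map φ : (ℝⁿ)^{⊗k} → (ℝⁿ)^{⊗l} is an ℝ-linear combination of the maps E_β, with β ranging over perfect matchings of [l+k], together with the maps H_α, with α ranging over (l+k)\n-diagrams; i.e. the set {E_β} ∪ {H_α} spans Hom_{SO(n)}((ℝⁿ)^{⊗k}, (ℝⁿ)^{⊗l}). -/
open Classical
noncomputable section

/-- The matrix `H_α : (ℝⁿ)^{⊗k} → (ℝⁿ)^{⊗l}` associated to an `(l+k)\n`-diagram `α`,
encoded by an involution `f` of `Fin (l+k)` whose fixed points (exactly `n` of them)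
are the free vertices: the determinant of the matrix whose columns are the standard
basis vectors indexed by the combined tuple at the free vertices (top row increasing,
then bottom row increasing, i.e. increasing order on `Fin (l+k)`), times the product
of Kronecker deltas over the size-two blocks. -/
def Hmat (n l k : ℕ) (f : Fin (l + k) → Fin (l + k))
    (hcard : (Finset.univ.filter (fun x => f x = x)).card = n) :
    Matrix (Fin l → Fin n) (Fin k → Fin n) ℝ :=
  Matrix.of fun I J =>
    (Matrix.det (Matrix.of fun r c : Fin n =>
      if r = Fin.append I J
        (((Finset.univ.filter (fun x : Fin (l + k) => f x = x)).orderIsoOfFin hcard c : Fin (l + k)))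
      then (1 : ℝ) else 0))
    * ∏ x ∈ Finset.univ.filter (fun x : Fin (l + k) => x < f x),
        (if Fin.append I J x = Fin.append I J (f x) then (1 : ℝ) else 0)


/-! ### Infinitesimal action -/

/-- `L a b T`: the action of an elementary matrix, extended as a derivation. -/
def LL {n N : ℕ} (a b : Fin n) (T : (Fin N → Fin n) → ℝ) (x : Fin N → Fin n) : ℝ :=
  ∑ i, if x i = a then T (Function.update x i b) else 0

/-- Infinitesimal invariance. -/
def IsInv {n N : ℕ} (T : (Fin N → Fin n) → ℝ) : Prop := ∀ a b x, LL a b T x = LL b a T x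

/-- The determinant tensor. -/
def DD (n : ℕ) (x : Fin n → Fin n) : ℝ :=
  Matrix.det (Matrix.of fun r c : Fin n => if r = x c then (1 : ℝ) else 0)

/-- tensoring with the invariant form -/
def cupf {n N : ℕ} (G : (Fin N → Fin n) → ℝ) (y : Fin (N + 2) → Fin n) : ℝ :=
  if y 0 = y 1 then G (fun i => y i.succ.succ) else 0

/-- Generators, inductively. -/
inductive Gen (n : ℕ) : (N : ℕ) → ((Fin N → Fin n) → ℝ) → Prop
  | one : Gen n 0 (fun _ => 1)
  | det : Gen n n (DD n)
  | cup {N : ℕ} {G : (Fin N → Fin n) → ℝ} : Gen n N G →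
      Gen n (N + 2) (cupf G)
  | perm {N : ℕ} {G : (Fin N → Fin n) → ℝ} (σ : Equiv.Perm (Fin N)) : Gen n N G →
      Gen n N (fun y => G (y ∘ σ))

lemma LL_perm {n N : ℕ} (a b : Fin n) (T : (Fin N → Fin n) → ℝ) (σ : Equiv.Perm (Fin N))
    (x : Fin N → Fin n) : LL a b (fun y => T (y ∘ σ)) x = LL a b T (x ∘ σ) := by
  unfold LL
  rw [← Equiv.sum_comp σ]
  refine Finset.sum_congr rfl fun i _ => ?_
  have : Function.update x (σ i) b ∘ σ = Function.update (x ∘ σ) i b := by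
    rw [Function.update_comp_equiv]; simp
  simp [this]

lemma Inv_perm {n N : ℕ} {T : (Fin N → Fin n) → ℝ} (h : IsInv T) (σ : Equiv.Perm (Fin N)) :
    IsInv (fun y => T (y ∘ σ)) := by
  intro a b x
  rw [LL_perm, LL_perm, h]

/-- prepend two entries -/
def c2 {n M : ℕ} (c d : Fin n) (y : Fin M → Fin n) : Fin (M + 2) → Fin n :=
  Fin.cons (α := fun _ => Fin n) c (Fin.cons (α := fun _ => Fin n) d y)

lemma c2_zero {n M : ℕ} (c d : Fin n) (y : Fin M → Fin n) : c2 c d y 0 = c := rfl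
lemma c2_one {n M : ℕ} (c d : Fin n) (y : Fin M → Fin n) : c2 c d y 1 = d := rfl
lemma c2_ss {n M : ℕ} (c d : Fin n) (y : Fin M → Fin n) (i : Fin M) :
    c2 c d y i.succ.succ = y i := rfl

lemma c2_surj {n M : ℕ} (x : Fin (M + 2) → Fin n) :
    x = c2 (x 0) (x 1) (fun i => x i.succ.succ) := by
  funext i
  refine Fin.cases rfl (fun j => ?_) i
  refine Fin.cases rfl (fun k => rfl) j

lemma cupf_c2 {n M : ℕ} (G : (Fin M → Fin n) → ℝ) (c d : Fin n) (y : Fin M → Fin n) :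
    cupf G (c2 c d y) = if c = d then G y else 0 := rfl

lemma LL_c2 {n M : ℕ} (a b : Fin n) (T : (Fin (M + 2) → Fin n) → ℝ) (c d : Fin n)
    (y : Fin M → Fin n) :
    LL a b T (c2 c d y) = (if c = a then T (c2 b d y) else 0) + (if d = a then T (c2 c b y) else 0)
      + ∑ k, if y k = a then T (c2 c d (Function.update y k b)) else 0 := by
  unfold LL
  rw [Fin.sum_univ_succ, Fin.sum_univ_succ, ← add_assoc]
  have h0 : Function.update (c2 c d y) 0 b = c2 b d y := by
    unfold c2; rw [Fin.update_cons_zero]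
  have h1 : Function.update (c2 c d y) (Fin.succ 0) b = c2 c b y := by
    unfold c2; rw [← Fin.cons_update, Fin.update_cons_zero]
  have h2 : ∀ k : Fin M, Function.update (c2 c d y) k.succ.succ b
      = c2 c d (Function.update y k b) := by
    intro k; unfold c2; rw [← Fin.cons_update, ← Fin.cons_update]
  simp only [h0, h1, h2, c2_ss]
  rfl

lemma Inv_cup {n N : ℕ} {G : (Fin N → Fin n) → ℝ} (h : IsInv G) :
    IsInv (cupf G) := by
  intro a b x
  rw [c2_surj x]
  generalize x 0 = c
  generalize x 1 = d
  generalize (fun i : Fin N => x i.succ.succ) = y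
  rw [LL_c2, LL_c2]
  simp only [cupf_c2]
  have h' := h a b y
  unfold LL at h'
  have e : ∀ a b, (∑ k, if y k = a then (if c = d then G (Function.update y k b) else 0)
      else 0) = if c = d then (∑ k, if y k = a then G (Function.update y k b) else 0) else 0 := by
    intro a b
    by_cases hcd : c = d <;> simp [hcd]
  rw [e, e, h']
  grind

lemma Inv_det {n : ℕ} : IsInv (DD n) := by
  have key : ∀ a b x, LL a b (DD n) x = if a = b then DD n x else 0 := by
    intro a b x
    set M : Matrix (Fin n) (Fin n) ℝ := Matrix.of fun r c : Fin n => if r = x c then (1 : ℝ) else 0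
      with hM
    have h := congrFun (Matrix.mulVec_cramer M (Pi.single b 1)) a
    have : ∀ i, DD n (Function.update x i b) = Matrix.cramer M (Pi.single b 1) i := by
      intro i
      rw [Matrix.cramer_apply, DD]
      congr 1
      ext r c
      by_cases hc : c = i
      · subst hc; simp [Pi.single_apply]
      · simp [hc, hM]
    simp only [LL, this]
    simp only [Matrix.mulVec, dotProduct, Pi.smul_apply, smul_eq_mul, Pi.single_apply] at h
    have hd : M.det = DD n x := rfl
    rw [hd] at h
    simp only [mul_ite, mul_one, mul_zero] at h
    rw [← h]
    refine Finset.sum_congr rfl fun i _ => ?_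
    simp [hM, eq_comm]
  intro a b x
  rw [key, key]
  by_cases h : a = b
  · simp [h]
  · simp [h, Ne.symm h]

lemma Inv_gen {n N : ℕ} {G : (Fin N → Fin n) → ℝ} (h : Gen n N G) : IsInv G := by
  induction h with
  | one => intro a b x; simp [LL]
  | det => exact Inv_det
  | cup _ ih => exact Inv_cup ih
  | perm σ _ ih => exact Inv_perm ih σ

/-- contraction of the first two entries -/
def ct {n M : ℕ} (u : (Fin (M + 2) → Fin n) → ℝ) (y : Fin M → Fin n) : ℝ := ∑ c, u (c2 c c y)

lemma Inv_ct {n M : ℕ} {u : (Fin (M + 2) → Fin n) → ℝ} (h : IsInv u) : IsInv (ct u) := by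
  have key : ∀ a b y, LL a b (ct u) y + (u (c2 b a y) + u (c2 a b y))
      = ∑ c, LL a b u (c2 c c y) := by
    intro a b y
    simp only [LL_c2, Finset.sum_add_distrib, Finset.sum_ite_eq', Finset.mem_univ, if_true]
    rw [add_comm, Finset.sum_comm]
    congr 1
    unfold LL ct
    refine Finset.sum_congr rfl fun i _ => ?_
    by_cases hy : y i = a <;> simp [hy]
  intro a b y
  have h1 := key a b y
  have h2 := key b a y
  simp only [h a b] at h1
  linarith

/-- splitting off two entries -/
def E2 (n M : ℕ) : (Fin n × Fin n × (Fin M → Fin n)) ≃ (Fin (M + 2) → Fin n) where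
  toFun p := c2 p.1 p.2.1 p.2.2
  invFun x := (x 0, x 1, fun i => x i.succ.succ)
  left_inv _ := rfl
  right_inv x := (c2_surj x).symm

lemma sum_c2 {n M : ℕ} (F : (Fin (M + 2) → Fin n) → ℝ) :
    ∑ x, F x = ∑ c, ∑ d, ∑ y, F (c2 c d y) := by
  rw [← Equiv.sum_comp (E2 n M), Fintype.sum_prod_type]
  refine Finset.sum_congr rfl fun c _ => ?_
  rw [Fintype.sum_prod_type]
  rfl

lemma orth_ct {n M : ℕ} {u : (Fin (M + 2) → Fin n) → ℝ}
    (h : ∀ G, Gen n (M + 2) G → ∑ x, u x * G x = 0) :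
    ∀ G, Gen n M G → ∑ x, ct u x * G x = 0 := by
  intro G hG
  have := h _ (Gen.cup hG)
  rw [← this]
  rw [sum_c2]
  simp only [cupf_c2, mul_ite, mul_zero]
  have : ∀ c : Fin n, (∑ d : Fin n, ∑ y : Fin M → Fin n, if c = d then u (c2 c d y) * G y else 0)
      = ∑ y : Fin M → Fin n, u (c2 c c y) * G y := by
    intro c
    rw [Finset.sum_comm]
    simp
  rw [Finset.sum_congr rfl fun c _ => this c, Finset.sum_comm]
  simp [ct, Finset.sum_mul]

lemma orth_perm {n N : ℕ} {u : (Fin N → Fin n) → ℝ}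
    (h : ∀ G, Gen n N G → ∑ x, u x * G x = 0) (σ : Equiv.Perm (Fin N)) :
    ∀ G, Gen n N G → ∑ x : Fin N → Fin n, u (x ∘ σ) * G x = 0 := by
  intro G hG
  have := h _ (Gen.perm σ⁻¹ hG)
  rw [← this, ← Equiv.sum_comp (Equiv.arrowCongr σ.symm (Equiv.refl (Fin n)))
    (fun x => u x * G (x ∘ (σ⁻¹ : Equiv.Perm (Fin N))))]
  refine Finset.sum_congr rfl fun x _ => ?_
  have e1 : (Equiv.arrowCongr σ.symm (Equiv.refl (Fin n))) x = x ∘ σ := by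
    funext i; simp [Equiv.arrowCongr]
  have e2 : (x ∘ σ) ∘ (σ⁻¹ : Equiv.Perm (Fin N)) = x := by
    funext i; simp
  rw [e1, e2]

lemma exists_perm {M : ℕ} {i j : Fin (M + 2)} (h : i ≠ j) :
    ∃ σ : Equiv.Perm (Fin (M + 2)), σ i = 0 ∧ σ j = 1 := by
  refine ⟨(Equiv.swap i 0).trans (Equiv.swap (Equiv.swap i 0 j) 1), ?_, ?_⟩
  · simp only [Equiv.trans_apply, Equiv.swap_apply_left]
    refine Equiv.swap_apply_of_ne_of_ne ?_ (by simp)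
    intro h0
    have : Equiv.swap i 0 i = Equiv.swap i 0 j := by rw [← h0]; simp
    exact h ((Equiv.swap i 0).injective this)
  · simp

/-! ### Core: traceless invariant tensors -/

lemma LL_adj {n N : ℕ} (a b : Fin n) (T S : (Fin N → Fin n) → ℝ) :
    ∑ x, LL a b T x * S x = ∑ x, T x * LL b a S x := by
  unfold LL
  simp only [Finset.sum_mul, Finset.mul_sum]
  rw [Finset.sum_comm, Finset.sum_comm (s := Finset.univ) (t := Finset.univ)
    (f := fun x i => T x * _)]
  refine Finset.sum_congr rfl fun i _ => ?_
  simp only [ite_mul, zero_mul, mul_ite, mul_zero]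
  rw [← Finset.sum_filter, ← Finset.sum_filter]
  refine Finset.sum_bij' (fun x _ => Function.update x i b) (fun x _ => Function.update x i a)
    ?_ ?_ ?_ ?_ ?_
  · intro x hx; simp
  · intro x hx; simp
  · intro x hx
    simp only [Finset.mem_filter, Finset.mem_univ, true_and] at hx
    simp [← hx]
  · intro x hx
    simp only [Finset.mem_filter, Finset.mem_univ, true_and] at hx
    simp [← hx]
  · intro x hx
    simp only [Finset.mem_filter, Finset.mem_univ, true_and] at hx
    simp [← hx]

lemma LL_trace {n N : ℕ} {T : (Fin N → Fin n) → ℝ}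
    (hc : ∀ i j, i ≠ j → ∀ x, ∑ c, T (Function.update (Function.update x i c) j c) = 0)
    (x : Fin N → Fin n) (i : Fin N) :
    ∑ a, LL (x i) a T (Function.update x i a) = T x := by
  unfold LL
  rw [Finset.sum_comm, Finset.sum_eq_single i]
  · simp
  · intro j _ hj
    simp only [Function.update_of_ne hj]
    by_cases h : x j = x i
    · simp only [h, if_true]
      exact hc i j (Ne.symm hj) x
    · simp [h]
  · simp

lemma LL_diag {n N : ℕ} (T : (Fin N → Fin n) → ℝ) (a : Fin n) (x : Fin N → Fin n) :
    LL a a T x = ((Finset.univ.filter (fun i => x i = a)).card : ℝ) * T x := by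
  unfold LL
  rw [← Finset.sum_filter, Finset.sum_congr rfl (g := fun _ => T x)]
  · simp
  · intro i hi
    simp only [Finset.mem_filter, Finset.mem_univ, true_and] at hi
    simp [← hi]

lemma norm_sum {n N : ℕ} {T : (Fin N → Fin n) → ℝ} (hT : IsInv T)
    (hc : ∀ i j, i ≠ j → ∀ x, ∑ c, T (Function.update (Function.update x i c) j c) = 0) :
    ∑ a, ∑ b, ∑ x, LL a b T x ^ 2 = ∑ x, (N : ℝ) * T x ^ 2 := by
  have h1 : ∀ a b, ∑ x, LL a b T x ^ 2 = ∑ x, T x * LL b a (LL a b T) x := by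
    intro a b
    rw [← LL_adj]
    simp [sq]
  simp only [h1]
  have : ∀ x, ∑ a, ∑ b, LL b a (LL a b T) x = N * T x := by
    intro x
    have : ∀ a b, LL b a (LL a b T) x =
        ∑ i, if x i = b then LL a b T (Function.update x i a) else 0 := fun _ _ => rfl
    simp only [this]
    calc _ = ∑ a, ∑ i, LL a (x i) T (Function.update x i a) := by
          refine Finset.sum_congr rfl fun a _ => ?_
          rw [Finset.sum_comm]
          simp
      _ = ∑ i, ∑ a, LL (x i) a T (Function.update x i a) := by
          rw [Finset.sum_comm]
          refine Finset.sum_congr rfl fun a _ => Finset.sum_congr rfl fun i _ => ?_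
          rw [hT]
      _ = _ := by simp [LL_trace hc]
  calc _ = ∑ x, T x * ∑ a, ∑ b, LL b a (LL a b T) x := by
        simp only [Finset.mul_sum]
        rw [Finset.sum_comm' (t' := Finset.univ) (s' := fun _ => Finset.univ) (by simp)]
        rw [Finset.sum_congr rfl fun b _ => Finset.sum_comm, Finset.sum_comm]
        refine Finset.sum_congr rfl fun x _ => Finset.sum_comm
    _ = _ := by
        refine Finset.sum_congr rfl fun x _ => ?_
        rw [this]; ring

lemma core_s13 {n N : ℕ} {T : (Fin N → Fin n) → ℝ} (hT : IsInv T)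
    (hc : ∀ i j, i ≠ j → ∀ x, ∑ c, T (Function.update (Function.update x i c) j c) = 0) :
    (∀ a b, a ≠ b → ∀ x, LL a b T x = 0) ∧
      ∀ x, T x ≠ 0 → Function.Injective x := by
  have h := norm_sum hT hc
  let m : Fin n → (Fin N → Fin n) → ℝ := fun a x =>
    ((Finset.univ.filter (fun i => x i = a)).card : ℝ)
  have hm : ∀ x, (N : ℝ) = ∑ a, m a x := by
    intro x
    have := Finset.card_eq_sum_card_fiberwise (s := Finset.univ) (t := Finset.univ) (f := x)
      (by simp)
    simp only [m]
    rw [← Nat.cast_sum, ← this]; simp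
  have hmm : ∀ a x, 0 ≤ m a x ^ 2 - m a x := by
    intro a x
    have : ((Finset.univ.filter (fun i => x i = a)).card) ≤
      ((Finset.univ.filter (fun i => x i = a)).card) ^ 2 := Nat.le_self_pow (by norm_num) _
    have : m a x ≤ m a x ^ 2 := by simp only [m]; exact_mod_cast this
    linarith
  -- total nonnegative sum
  let F : Fin n → Fin n → (Fin N → Fin n) → ℝ := fun a b x =>
    if a = b then (m a x ^ 2 - m a x) * T x ^ 2 else LL a b T x ^ 2
  have hF0 : ∀ a b x, 0 ≤ F a b x := by
    intro a b x
    simp only [F]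
    split_ifs
    · exact mul_nonneg (hmm a x) (sq_nonneg _)
    · positivity
  have hFL : ∀ a b x, F a b x = LL a b T x ^ 2 - if a = b then m a x * T x ^ 2 else 0 := by
    intro a b x
    simp only [F]
    split_ifs with hab
    · subst hab
      rw [LL_diag]
      simp only [m]; ring
    · ring
  have hsum : ∑ a, ∑ b, ∑ x, F a b x = 0 := by
    simp only [hFL, Finset.sum_sub_distrib, h]
    rw [sub_eq_zero]
    have : ∀ a : Fin n, (∑ b : Fin n, ∑ x, if a = b then m a x * T x ^ 2 else 0)
        = ∑ x, m a x * T x ^ 2 := by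
      intro a
      rw [Finset.sum_comm]
      simp
    rw [Finset.sum_congr rfl fun a _ => this a, Finset.sum_comm]
    refine Finset.sum_congr rfl fun x _ => ?_
    rw [hm x, Finset.sum_mul]
  have hF : ∀ a b x, F a b x = 0 := by
    intro a b x
    have h1 := (Finset.sum_eq_zero_iff_of_nonneg (fun a _ => Finset.sum_nonneg fun b _ =>
      Finset.sum_nonneg fun x _ => hF0 a b x)).1 hsum a (Finset.mem_univ _)
    have h2 := (Finset.sum_eq_zero_iff_of_nonneg (fun b _ =>
      Finset.sum_nonneg fun x _ => hF0 a b x)).1 h1 b (Finset.mem_univ _)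
    exact (Finset.sum_eq_zero_iff_of_nonneg (fun x _ => hF0 a b x)).1 h2 x (Finset.mem_univ _)
  constructor
  · intro a b hab x
    have := hF a b x
    simpa [F, hab] using this
  · intro x hx i j hij
    have := hF (x j) (x j) x
    simp only [F, if_true, mul_eq_zero, pow_eq_zero_iff, ne_eq, OfNat.ofNat_ne_zero,
      not_false_eq_true, hx, or_false] at this
    have h1 : ((Finset.univ.filter (fun i => x i = x j)).card) ≤ 1 := by
      by_contra hlt
      push Not at hlt
      have : (2 : ℝ) ≤ m (x j) x := by simp only [m]; exact_mod_cast hlt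
      nlinarith
    rw [Finset.card_le_one] at h1
    exact h1 i (by simp [hij]) j (by simp)

lemma core_surj {n N : ℕ} {T : (Fin N → Fin n) → ℝ} (hN : 0 < N)
    (h1 : ∀ a b, a ≠ b → ∀ x, LL a b T x = 0) (x : Fin N → Fin n) (hx : T x ≠ 0) :
    Function.Surjective x := by
  intro a
  by_contra hne
  push Not at hne
  let i : Fin N := ⟨0, hN⟩
  have := h1 a (x i) (Ne.symm (hne i)) (Function.update x i a)
  unfold LL at this
  rw [Finset.sum_eq_single i] at this
  · simp at this; exact hx this
  · intro j _ hj
    simp [Function.update_of_ne hj, hne j]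
  · simp

lemma core_swap {n N : ℕ} {T : (Fin N → Fin n) → ℝ}
    (h1 : ∀ a b, a ≠ b → ∀ x, LL a b T x = 0) (x : Fin N → Fin n) (hx : Function.Injective x)
    (i j : Fin N) (hij : i ≠ j) : T (x ∘ Equiv.swap i j) = - T x := by
  have := h1 (x j) (x i) (fun h => hij (hx h.symm)) (Function.update x i (x j))
  unfold LL at this
  rw [← Finset.sum_subset (Finset.subset_univ {i, j})] at this
  · rw [Finset.sum_pair hij] at this
    simp only [Function.update_self, if_true, Function.update_of_ne (Ne.symm hij),
      Function.update_idem, Function.update_eq_self] at this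
    have e : Function.update (Function.update x i (x j)) j (x i) = x ∘ Equiv.swap i j := by
      rw [Equiv.comp_swap_eq_update, Function.update_comm hij]
    rw [e] at this
    linarith
  · intro k _ hk
    simp only [Finset.mem_insert, Finset.mem_singleton, not_or] at hk
    rw [Function.update_of_ne hk.1, if_neg]
    exact fun h => hk.2 (hx h)

lemma DD_perm {n : ℕ} (σ : Equiv.Perm (Fin n)) : DD n σ = (Equiv.Perm.sign σ : ℤ) := by
  have : (Matrix.of fun r c : Fin n => if r = σ c then (1 : ℝ) else 0)
      = (σ⁻¹ : Equiv.Perm (Fin n)).permMatrix ℝ := by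
    ext r c
    simp only [Matrix.of_apply, Equiv.Perm.permMatrix, PEquiv.toMatrix_apply,
      Equiv.toPEquiv_apply, Option.mem_some_iff]
    have : r = σ c ↔ σ⁻¹ r = c := by rw [Equiv.Perm.inv_eq_iff_eq]
    simp [this]
  rw [DD, this, Matrix.det_permutation]
  simp

lemma DD_not_inj {n : ℕ} (x : Fin n → Fin n) (h : ¬ Function.Injective x) : DD n x = 0 := by
  unfold Function.Injective at h
  push Not at h
  obtain ⟨i, j, hij, hne⟩ := h
  refine Matrix.det_zero_of_column_eq hne ?_
  intro k
  simp [hij]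

lemma zero_lemma {n : ℕ} (N : ℕ) : ∀ u : (Fin N → Fin n) → ℝ, IsInv u →
    (∀ G, Gen n N G → ∑ x, u x * G x = 0) → u = 0 := by
  induction N using Nat.strong_induction_on with
  | _ N ih =>
  intro u hu ho
  have hc : ∀ i j, i ≠ j → ∀ x, ∑ c, u (Function.update (Function.update x i c) j c) = 0 := by
    intro i j hij x
    obtain ⟨M, rfl⟩ : ∃ M, N = M + 2 := by
      refine ⟨N - 2, ?_⟩
      have := i.2; have := j.2
      have : (i : ℕ) ≠ j := fun h => hij (Fin.ext h)
      omega
    obtain ⟨σ, hi, hj⟩ := exists_perm hij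
    have h0 := ih M (by omega) (ct (fun y => u (y ∘ σ))) (Inv_ct (Inv_perm hu σ))
      (orth_ct (orth_perm ho σ))
    have h1 := congrFun h0 (fun m => x (σ⁻¹ m.succ.succ))
    unfold ct at h1
    rw [← Pi.zero_apply (M := fun _ => ℝ), ← h1]
    refine Finset.sum_congr rfl fun c _ => ?_
    congr 1
    funext k
    by_cases hkj : k = j
    · subst hkj; simp [hj, c2_one]
    · by_cases hki : k = i
      · subst hki; simp [hi, hij, c2_zero]
      · have a0 : σ k ≠ 0 := by rw [← hi]; exact fun h => hki (σ.injective h)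
        have a1 : σ k ≠ 1 := by rw [← hj]; exact fun h => hkj (σ.injective h)
        obtain ⟨p, hp⟩ := Fin.exists_succ_eq.2 a0
        have : p ≠ 0 := by rintro rfl; exact a1 hp.symm
        obtain ⟨q, rfl⟩ := Fin.exists_succ_eq.2 this
        simp [hkj, hki, ← hp, c2_ss]
        rw [hp]; simp
  obtain ⟨h1, h2⟩ := core_s13 hu hc
  rcases Nat.eq_zero_or_pos N with rfl | hN
  · have := ho _ Gen.one
    funext x
    rw [Fintype.sum_unique] at this
    rw [Subsingleton.elim x default]
    simpa using this
  · by_cases hNn : N = n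
    · subst hNn
      have hs : ∀ σ : Equiv.Perm (Fin N), u σ = u id * DD N σ := by
        intro σ
        rw [DD_perm]
        induction σ using Equiv.Perm.swap_induction_on' with
        | one => simp
        | mul_swap f i j hij hf =>
          have := core_swap h1 f f.injective i j hij
          rw [Equiv.Perm.coe_mul, this, hf]
          simp [Equiv.Perm.sign_swap hij]
      have hx : ∀ x, u x = u id * DD N x := by
        intro x
        by_cases hi : Function.Injective x
        · have hb : Function.Bijective x := Finite.injective_iff_bijective.1 hi
          exact hs (Equiv.ofBijective x hb)
        · rw [DD_not_inj x hi, mul_zero]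
          by_contra h
          exact hi (h2 x h)
      have h3 := ho _ Gen.det
      have h4 : u id * ∑ x, DD N x ^ 2 = 0 := by
        rw [← h3, Finset.mul_sum]
        refine Finset.sum_congr rfl fun x _ => ?_
        rw [hx x]; ring
      have h5 : (0 : ℝ) < ∑ x, DD N x ^ 2 := by
        refine Finset.sum_pos' (fun x _ => sq_nonneg _) ⟨id, Finset.mem_univ _, ?_⟩
        have := DD_perm (1 : Equiv.Perm (Fin N))
        have e : DD N id = 1 := by simpa using this
        rw [e]; norm_num
      have h6 : u id = 0 := by
        rcases mul_eq_zero.1 h4 with h | h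
        · exact h
        · exact absurd h h5.ne'
      funext x
      rw [hx x, h6]; simp
    · funext x
      by_contra h
      refine hNn ?_
      have := Fintype.card_of_bijective ⟨h2 x h, core_surj hN h1 x h⟩
      simpa using this

/-! ### Generators are diagrams -/

/-- indicator of being constant on the pairs of `f` -/
def ind {n N : ℕ} (f : Fin N → Fin N) (y : Fin N → Fin n) : ℝ :=
  if ∀ x, y x = y (f x) then 1 else 0

lemma ind_perm {n N : ℕ} (f : Fin N → Fin N) (σ : Equiv.Perm (Fin N)) (y : Fin N → Fin n) :
    ind f (y ∘ σ) = ind (fun x => σ (f (σ.symm x))) y := by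
  unfold ind
  congr 1
  apply propext
  constructor
  · intro h x
    simpa using h (σ.symm x)
  · intro h x
    simpa using h (σ x)

/-- extend an involution by a transposition of the first two entries -/
def fcup {N : ℕ} (f : Fin N → Fin N) : Fin (N + 2) → Fin (N + 2) :=
  Fin.cons (α := fun _ => Fin (N + 2)) 1
    (Fin.cons (α := fun _ => Fin (N + 2)) 0 (fun i => (f i).succ.succ))

lemma fcup_zero {N : ℕ} (f : Fin N → Fin N) : fcup f 0 = 1 := rfl
lemma fcup_one {N : ℕ} (f : Fin N → Fin N) : fcup f 1 = 0 := rfl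
lemma fcup_ss {N : ℕ} (f : Fin N → Fin N) (i : Fin N) : fcup f i.succ.succ = (f i).succ.succ := rfl

lemma forall_two {N : ℕ} {P : Fin (N + 2) → Prop} :
    (∀ x, P x) ↔ P 0 ∧ P 1 ∧ ∀ i : Fin N, P i.succ.succ := by
  rw [Fin.forall_fin_succ, Fin.forall_fin_succ]
  rfl

lemma ind_cup {n N : ℕ} (f : Fin N → Fin N) (y : Fin (N + 2) → Fin n) :
    ind (fcup f) y = if y 0 = y 1 then ind f (fun i => y i.succ.succ) else 0 := by
  unfold ind
  rw [← ite_and]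
  congr 1
  apply propext
  rw [forall_two]
  simp only [fcup_zero, fcup_one, fcup_ss]
  constructor
  · rintro ⟨h, _, h'⟩; exact ⟨h, h'⟩
  · rintro ⟨h, h'⟩; exact ⟨h, h.symm, h'⟩

lemma Gen_form {n N : ℕ} {G : (Fin N → Fin n) → ℝ} (h : Gen n N G) :
    ∃ f : Fin N → Fin N, (∀ x, f (f x) = x) ∧
      (((∀ x, f x ≠ x) ∧ ∀ y, G y = ind f y) ∨
       (∃ e : Fin n → Fin N, Function.Injective e ∧ (∀ x, f x = x ↔ x ∈ Set.range e) ∧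
          ∀ y, G y = ind f y * DD n (y ∘ e))) := by
  induction h with
  | one => exact ⟨id, fun _ => rfl, Or.inl ⟨fun x => x.elim0, fun y => by simp [ind]⟩⟩
  | det =>
    refine ⟨id, fun _ => rfl, Or.inr ⟨id, Function.injective_id, by simp, fun y => by simp [ind]⟩⟩
  | @cup N G _ ih =>
    obtain ⟨f, hf, h⟩ := ih
    refine ⟨fcup f, ?_, ?_⟩
    · rw [forall_two]
      simp [fcup_zero, fcup_one, fcup_ss, hf]
    · rcases h with ⟨h1, h2⟩ | ⟨e, he, h1, h2⟩
      · left
        constructor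
        · rw [forall_two]
          simp [fcup_zero, fcup_one, fcup_ss, h1]
        · intro y
          rw [ind_cup, cupf, h2]
      · right
        refine ⟨fun c => (e c).succ.succ, ?_, ?_, ?_⟩
        · intro a b hab
          exact he (by simpa using hab)
        · rw [forall_two]
          refine ⟨?_, ?_, ?_⟩
          · simp [fcup_zero]
          · rw [fcup_one]
            simp only [zero_ne_one, false_iff, Set.mem_range, not_exists]
            intro x hx
            rw [← Fin.succ_zero_eq_one] at hx
            exact Fin.succ_ne_zero _ (Fin.succ_injective _ hx)
          · intro i
            have := h1 i
            simp only [Set.mem_range] at this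
            simp [fcup_ss, this]
        · intro y
          rw [ind_cup, cupf, h2, ite_mul, zero_mul]
          rfl
  | @perm N G σ _ ih =>
    obtain ⟨f, hf, h⟩ := ih
    refine ⟨fun x => σ (f (σ.symm x)), by simp [hf], ?_⟩
    rcases h with ⟨h1, h2⟩ | ⟨e, he, h1, h2⟩
    · left
      refine ⟨?_, fun y => (h2 _).trans (ind_perm f σ y)⟩
      intro x hx
      refine h1 (σ.symm x) ?_
      rw [Equiv.eq_symm_apply]; exact hx
    · right
      refine ⟨σ ∘ e, σ.injective.comp he, ?_, ?_⟩
      · intro x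
        have := h1 (σ.symm x)
        rw [Equiv.eq_symm_apply] at this
        rw [this]
        simp [Equiv.eq_symm_apply]
      · intro y
        refine (h2 _).trans ?_
        rw [ind_perm]
        rfl

lemma DD_comp {n : ℕ} (z : Fin n → Fin n) (τ : Equiv.Perm (Fin n)) :
    DD n (z ∘ τ) = (Equiv.Perm.sign τ : ℤ) * DD n z := by
  unfold DD
  rw [← Matrix.det_permute']
  rfl

lemma ind_prod {n N : ℕ} (f : Fin N → Fin N) (hf : ∀ x, f (f x) = x) (y : Fin N → Fin n) :
    ∏ x ∈ Finset.univ.filter (fun x : Fin N => x < f x),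
        (if y x = y (f x) then (1 : ℝ) else 0) = ind f y := by
  unfold ind
  split_ifs with h
  · exact Finset.prod_eq_one fun x _ => by rw [if_pos (h x)]
  · push Not at h
    obtain ⟨x, hx⟩ := h
    rcases lt_trichotomy x (f x) with h1 | h1 | h1
    · exact Finset.prod_eq_zero (i := x) (by simp [h1]) (by simp [hx])
    · exact absurd (congrArg y h1) hx
    · refine Finset.prod_eq_zero (i := f x) (by simp [h1, hf]) ?_
      rw [hf, if_neg (Ne.symm hx)]

/-- tensors to matrices -/
def toMat (n l k : ℕ) : ((Fin (l + k) → Fin n) → ℝ) →ₗ[ℝ]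
    Matrix (Fin l → Fin n) (Fin k → Fin n) ℝ where
  toFun T := Matrix.of fun I J => T (Fin.append I J)
  map_add' _ _ := rfl
  map_smul' _ _ := rfl

lemma toMat_apply {n l k : ℕ} (T : (Fin (l + k) → Fin n) → ℝ) (I : Fin l → Fin n)
    (J : Fin k → Fin n) : toMat n l k T I J = T (Fin.append I J) := rfl

lemma Gen_span {n l k : ℕ} {G : (Fin (l + k) → Fin n) → ℝ} (h : Gen n (l + k) G) :
    toMat n l k G ∈ Submodule.span ℝ
      ({M : Matrix (Fin l → Fin n) (Fin k → Fin n) ℝ |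
          ∃ (f : Fin (l + k) → Fin (l + k)) (hf : ∀ x, f (f x) = x),
            (∀ x, f x ≠ x) ∧ M = Dmat n l k (matchingSetoid f hf)} ∪
       {M : Matrix (Fin l → Fin n) (Fin k → Fin n) ℝ |
          ∃ (f : Fin (l + k) → Fin (l + k))
            (hcard : (Finset.univ.filter (fun x => f x = x)).card = n),
            (∀ x, f (f x) = x) ∧ M = Hmat n l k f hcard}) := by
  obtain ⟨f, hf, ⟨h1, h2⟩ | ⟨e, he, h1, h2⟩⟩ := Gen_form h
  · refine Submodule.subset_span (Or.inl ⟨f, hf, h1, ?_⟩)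
    ext I J
    rw [toMat_apply, h2]
    simp only [Dmat, Matrix.of_apply, ind]
    have : (∀ x, Fin.append I J x = Fin.append I J (f x)) ↔
        ∀ x y, (matchingSetoid f hf).r x y → Fin.append I J x = Fin.append I J y := by
      constructor
      · rintro h x y (rfl | rfl)
        · rfl
        · exact h x
      · intro h x
        exact h x (f x) (Or.inr rfl)
    simp only [this]
  · have himg : Finset.univ.filter (fun x => f x = x) = Finset.univ.image e := by
      ext x
      simp [h1]
    have hcard : (Finset.univ.filter (fun x => f x = x)).card = n := by
      rw [himg, Finset.card_image_of_injective _ he]; simp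
    let s := (Finset.univ.filter (fun x => f x = x)).orderIsoOfFin hcard
    have hmem : ∀ c, e c ∈ Finset.univ.filter (fun x => f x = x) := by
      intro c; rw [himg]; simp
    let t : Fin n → Fin n := fun c => s.symm ⟨e c, hmem c⟩
    have ht : Function.Injective t := by
      intro a b hab
      have := s.symm.injective hab
      exact he (congrArg Subtype.val this)
    let τ : Equiv.Perm (Fin n) := Equiv.ofBijective t (Finite.injective_iff_bijective.1 ht)
    have hst : ∀ c, (s (τ c) : Fin (l + k)) = e c := by
      intro c
      simp [τ, t]
    have : toMat n l k G = ((Equiv.Perm.sign τ : ℤ) : ℝ) • Hmat n l k f hcard := by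
      ext I J
      rw [toMat_apply, h2]
      simp only [Hmat, Matrix.of_apply, Matrix.smul_apply, smul_eq_mul]
      rw [ind_prod f hf]
      have e1 : Fin.append I J ∘ e = (fun c => Fin.append I J (s c)) ∘ τ := by
        funext c
        simp [hst]
      rw [e1, DD_comp, mul_comm, mul_assoc]
      rfl
    rw [this]
    exact Submodule.smul_mem _ _ (Submodule.subset_span (Or.inr ⟨f, hcard, hf, rfl⟩))

/-! ### Decomposition -/

lemma LL_add {n N : ℕ} (a b : Fin n) (S T : (Fin N → Fin n) → ℝ) (x) :
    LL a b (S + T) x = LL a b S x + LL a b T x := by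
  unfold LL
  rw [← Finset.sum_add_distrib]
  refine Finset.sum_congr rfl fun i _ => ?_
  split_ifs <;> simp

lemma LL_smul {n N : ℕ} (a b : Fin n) (r : ℝ) (T : (Fin N → Fin n) → ℝ) (x) :
    LL a b (r • T) x = r * LL a b T x := by
  unfold LL
  rw [Finset.mul_sum]
  refine Finset.sum_congr rfl fun i _ => ?_
  split_ifs <;> simp

lemma Inv_span {n N : ℕ} {T : (Fin N → Fin n) → ℝ}
    (h : T ∈ Submodule.span ℝ {G | Gen n N G}) : IsInv T := by
  induction h using Submodule.span_induction with
  | mem x hx => exact Inv_gen hx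
  | zero => intro a b x; simp [LL]
  | add S T _ _ hS hT => intro a b x; rw [LL_add, LL_add, hS, hT]
  | smul r T _ hT => intro a b x; rw [LL_smul, LL_smul, hT]

lemma decomp {ι : Type} [Fintype ι] (W : Submodule ℝ (ι → ℝ)) (T : ι → ℝ) :
    ∃ w ∈ W, ∃ u : ι → ℝ, T = w + u ∧ ∀ v ∈ W, ∑ x, u x * v x = 0 := by
  let L : EuclideanSpace ℝ ι ≃ₗ[ℝ] (ι → ℝ) := WithLp.linearEquiv 2 ℝ (ι → ℝ)
  let W' : Submodule ℝ (EuclideanSpace ℝ ι) := W.comap L.toLinearMap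
  obtain ⟨w, hw, u, hu, h⟩ := W'.exists_add_mem_mem_orthogonal (L.symm T)
  refine ⟨L w, hw, L u, ?_, ?_⟩
  · rw [← map_add, ← h]; simp
  · intro v hv
    have := (Submodule.mem_orthogonal _ _).1 hu (L.symm v) (by simpa [W'] using hv)
    rw [PiLp.inner_apply] at this
    simpa [L] using this

lemma mem_span_of_inv {n N : ℕ} {T : (Fin N → Fin n) → ℝ} (h : IsInv T) :
    T ∈ Submodule.span ℝ {G | Gen n N G} := by
  obtain ⟨w, hw, u, rfl, hu⟩ := decomp (Submodule.span ℝ {G | Gen n N G}) T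
  have hwi := Inv_span hw
  have hui : IsInv u := by
    intro a b x
    have := h a b x
    rw [LL_add, LL_add, hwi a b x] at this
    linarith
  have := zero_lemma N u hui fun G hG => hu G (Submodule.subset_span hG)
  rw [this, add_zero]
  exact hw

/-! ### From the group to the Lie algebra -/

lemma exists_curve {n : ℕ} (X : Matrix (Fin n) (Fin n) ℝ) (hX : X.transpose = -X) :
    ∃ g : ℝ → Matrix (Fin n) (Fin n) ℝ, (∀ t, (g t).transpose * g t = 1 ∧ (g t).det = 1) ∧
      g 0 = 1 ∧ ∀ i j, HasDerivAt (fun t => g t i j) (X i j) 0 := by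
  let _ : NormedRing (Matrix (Fin n) (Fin n) ℝ) := Matrix.linftyOpNormedRing
  let _ : NormedAlgebra ℝ (Matrix (Fin n) (Fin n) ℝ) := Matrix.linftyOpNormedAlgebra
  have horth : ∀ t : ℝ, (NormedSpace.exp (t • X)).transpose * NormedSpace.exp (t • X) = 1 := by
    intro t
    rw [← Matrix.exp_transpose, Matrix.transpose_smul, hX, smul_neg,
      ← Matrix.exp_add_of_commute _ _ (Commute.neg_left (Commute.refl (t • X)))]
    simp
  refine ⟨fun t => NormedSpace.exp (t • X), fun t => ⟨horth t, ?_⟩, by simp, ?_⟩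
  · have h1 : t • X = (t / 2) • X + (t / 2) • X := by rw [← add_smul]; simp
    have h2 := congrArg Matrix.det (horth (t / 2))
    rw [Matrix.det_mul, Matrix.det_transpose, Matrix.det_one] at h2
    change (NormedSpace.exp (t • X)).det = 1
    rw [h1, Matrix.exp_add_of_commute _ _ (Commute.refl _), Matrix.det_mul, h2]
  · intro i j
    have h := hasDerivAt_exp_smul_const X (0 : ℝ)
    simp only [zero_smul, NormedSpace.exp_zero, one_mul] at h
    have h1 := hasDerivAt_pi.1 (hasDerivAt_pi.1 h i) j
    exact h1

lemma hasDeriv_tensorPow {n k : ℕ} (X : Matrix (Fin n) (Fin n) ℝ)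
    (g : ℝ → Matrix (Fin n) (Fin n) ℝ) (h0 : g 0 = 1)
    (hg : ∀ i j, HasDerivAt (fun t => g t i j) (X i j) 0) (I J : Fin k → Fin n) :
    HasDerivAt (fun t => tensorPow n k (g t) I J)
      (∑ i, (∏ j ∈ Finset.univ.erase i, (if I j = J j then (1 : ℝ) else 0))
        * X (I i) (J i)) 0 := by
  have := HasDerivAt.fun_finsetProd (u := Finset.univ) (f := fun i t => g t (I i) (J i))
    (f' := fun i => X (I i) (J i)) (x := (0 : ℝ)) (fun i _ => hg _ _)
  simpa [tensorPow, h0, Matrix.one_apply] using this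

lemma sum_update_s13 {n k : ℕ} (I : Fin k → Fin n) (i : Fin k) (F : (Fin k → Fin n) → ℝ) :
    ∑ J, (∏ j ∈ Finset.univ.erase i, (if I j = J j then (1 : ℝ) else 0)) * F J
      = ∑ c, F (Function.update I i c) := by
  have : ∀ J : Fin k → Fin n,
      (∏ j ∈ Finset.univ.erase i, (if I j = J j then (1 : ℝ) else 0))
      = if J = Function.update I i (J i) then 1 else 0 := by
    intro J
    split_ifs with h
    · refine Finset.prod_eq_one fun j hj => ?_
      have hj' : j ≠ i := Finset.ne_of_mem_erase hj
      rw [h]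
      simp [hj']
    · have : ∃ j, j ≠ i ∧ J j ≠ I j := by
        by_contra hcon
        push Not at hcon
        refine h ?_
        funext j
        by_cases hj : j = i
        · subst hj; simp
        · simp [hj, hcon j hj]
      obtain ⟨j, hj, hne⟩ := this
      exact Finset.prod_eq_zero (i := j) (by simp [hj]) (by simp [Ne.symm hne])
  simp only [this, ite_mul, one_mul, zero_mul]
  rw [← Finset.sum_filter]
  refine Finset.sum_bij' (fun J _ => J i) (fun c _ => Function.update I i c) ?_ ?_ ?_ ?_ ?_
  · simp
  · simp
  · intro J hJ
    simp only [Finset.mem_filter, Finset.mem_univ, true_and] at hJ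
    exact hJ.symm
  · simp
  · intro J hJ
    simp only [Finset.mem_filter, Finset.mem_univ, true_and] at hJ
    rw [← hJ]

lemma infinitesimal {n k l : ℕ} (φ : Matrix (Fin l → Fin n) (Fin k → Fin n) ℝ)
    (hφ : ∀ g : Matrix (Fin n) (Fin n) ℝ, g.transpose * g = 1 → g.det = 1 →
      tensorPow n l g * φ = φ * tensorPow n k g)
    (X : Matrix (Fin n) (Fin n) ℝ) (hX : X.transpose = -X) (I : Fin l → Fin n)
    (J : Fin k → Fin n) :
    (∑ i, ∑ c, X (I i) c * φ (Function.update I i c) J)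
      + ∑ j, ∑ c, X (J j) c * φ I (Function.update J j c) = 0 := by
  obtain ⟨g, hg, h0, hd⟩ := exists_curve X hX
  have h1 : HasDerivAt (fun t => ∑ I', tensorPow n l (g t) I I' * φ I' J)
      (∑ i, ∑ c, X (I i) c * φ (Function.update I i c) J) 0 := by
    have := HasDerivAt.fun_sum (u := Finset.univ) (x := (0 : ℝ)) (fun I' (_ : I' ∈ Finset.univ) =>
      (hasDeriv_tensorPow X g h0 hd I I').mul_const (φ I' J))
    refine this.congr_deriv ?_
    simp only [Finset.sum_mul]
    rw [Finset.sum_comm]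
    refine Finset.sum_congr rfl fun i _ => ?_
    simp only [mul_assoc]
    rw [sum_update_s13 I i (fun I' => X (I i) (I' i) * φ I' J)]
    simp
  have hd' : ∀ i j, HasDerivAt (fun t => (g t).transpose i j) (X.transpose i j) 0 :=
    fun i j => hd j i
  have h2 : HasDerivAt (fun t => ∑ J', φ I J' * tensorPow n k (g t) J' J)
      (- ∑ j, ∑ c, X (J j) c * φ I (Function.update J j c)) 0 := by
    have := HasDerivAt.fun_sum (u := Finset.univ) (x := (0 : ℝ)) (fun J' (_ : J' ∈ Finset.univ) =>
      (hasDeriv_tensorPow X.transpose (fun t => (g t).transpose) (by simp [h0]) hd' J J').mul_const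
        (φ I J'))
    have hfun : (fun t => ∑ J', φ I J' * tensorPow n k (g t) J' J)
        = fun t => ∑ J', tensorPow n k (g t).transpose J J' * φ I J' := by
      funext t
      refine Finset.sum_congr rfl fun J' _ => ?_
      rw [mul_comm]
      rfl
    rw [hfun]
    refine this.congr_deriv ?_
    · simp only [Finset.sum_mul]
      rw [Finset.sum_comm, ← Finset.sum_neg_distrib]
      refine Finset.sum_congr rfl fun i _ => ?_
      simp only [mul_assoc]
      rw [sum_update_s13 J i (fun J' => X.transpose (J i) (J' i) * φ I J')]
      rw [hX]
      simp
  have heq : (fun t => ∑ I', tensorPow n l (g t) I I' * φ I' J)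
      = (fun t => ∑ J', φ I J' * tensorPow n k (g t) J' J) := by
    funext t
    exact congrFun (congrFun (hφ (g t) (hg t).1 (hg t).2) I) J
  rw [heq] at h1
  have := h1.unique h2
  rw [this]; ring

/-- the tensor of a matrix -/
def ofMat {n k l : ℕ} (φ : Matrix (Fin l → Fin n) (Fin k → Fin n) ℝ)
    (y : Fin (l + k) → Fin n) : ℝ :=
  φ (fun i => y (Fin.castAdd k i)) (fun j => y (Fin.natAdd l j))

lemma ofMat_inv {n k l : ℕ} (φ : Matrix (Fin l → Fin n) (Fin k → Fin n) ℝ)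
    (hφ : ∀ g : Matrix (Fin n) (Fin n) ℝ, g.transpose * g = 1 → g.det = 1 →
      tensorPow n l g * φ = φ * tensorPow n k g) : IsInv (ofMat φ) := by
  intro a b x
  let X : Matrix (Fin n) (Fin n) ℝ := Matrix.single a b 1 - Matrix.single b a 1
  have hX : X.transpose = -X := by simp [X]
  have h := infinitesimal φ hφ X hX (fun i => x (Fin.castAdd k i)) (fun j => x (Fin.natAdd l j))
  have hXs : ∀ (p : Fin n) (F : Fin n → ℝ), ∑ c, X p c * F c
      = (if p = a then F b else 0) - (if p = b then F a else 0) := by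
    intro p F
    have e : ∀ c, X p c * F c = (if b = c then (if p = a then F c else 0) else 0)
        - (if a = c then (if p = b then F c else 0) else 0) := by
      intro c
      simp only [X, Matrix.sub_apply, Matrix.single_apply]
      grind
    simp [e]
  have e1 : ∀ (i : Fin l) (c : Fin n),
      ofMat φ (Function.update x (Fin.castAdd k i) c)
      = φ (Function.update (fun i => x (Fin.castAdd k i)) i c) (fun j => x (Fin.natAdd l j)) := by
    intro i c
    unfold ofMat
    congr 1
    · funext j
      by_cases h : j = i
      · subst h; simp
      · simp [h]
    · funext j
      rw [Function.update_of_ne]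
      intro h
      have := congrArg Fin.val h
      simp at this
      omega
  have e2 : ∀ (i : Fin k) (c : Fin n),
      ofMat φ (Function.update x (Fin.natAdd l i) c)
      = φ (fun i => x (Fin.castAdd k i)) (Function.update (fun j => x (Fin.natAdd l j)) i c) := by
    intro i c
    unfold ofMat
    congr 1
    · funext j
      rw [Function.update_of_ne]
      intro h
      have := congrArg Fin.val h
      simp at this
      omega
    · funext j
      by_cases h : j = i
      · subst h; simp
      · simp [h]
  unfold LL
  rw [Fin.sum_univ_add, Fin.sum_univ_add]
  simp only [e1, e2]
  simp only [hXs, Finset.sum_sub_distrib] at h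
  linarith

/-- every `SO(n)`-equivariant linear map `(ℝⁿ)^{⊗k} → (ℝⁿ)^{⊗l}` lies in
the `ℝ`-span of the maps `E_β := D_β` (`β` ranging over perfect matchings of `[l+k]`,
encoded by fixed-point-free involutions) together with the maps `H_α` (`α` ranging over
`(l+k)\n`-diagrams, encoded by involutions with exactly `n` fixed points). -/
theorem special_orthogonal_span (n k l : ℕ) (hn : 0 < n)
    (φ : Matrix (Fin l → Fin n) (Fin k → Fin n) ℝ)
    (hφ : ∀ g : Matrix (Fin n) (Fin n) ℝ, g.transpose * g = 1 → g.det = 1 →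
      tensorPow n l g * φ = φ * tensorPow n k g) :
    φ ∈ Submodule.span ℝ
      ({M : Matrix (Fin l → Fin n) (Fin k → Fin n) ℝ |
          ∃ (f : Fin (l + k) → Fin (l + k)) (hf : ∀ x, f (f x) = x),
            (∀ x, f x ≠ x) ∧ M = Dmat n l k (matchingSetoid f hf)} ∪
       {M : Matrix (Fin l → Fin n) (Fin k → Fin n) ℝ |
          ∃ (f : Fin (l + k) → Fin (l + k))
            (hcard : (Finset.univ.filter (fun x => f x = x)).card = n),
            (∀ x, f (f x) = x) ∧ M = Hmat n l k f hcard}) := by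
  have h := mem_span_of_inv (ofMat_inv φ hφ)
  have h2 : toMat n l k (ofMat φ) = φ := by
    ext I J
    rw [toMat_apply]
    simp [ofMat]
  rw [← h2]
  have h3 := Submodule.mem_map_of_mem (f := toMat n l k) h
  rw [Submodule.map_span] at h3
  refine Submodule.span_le.2 ?_ h3
  rintro _ ⟨G, hG, rfl⟩
  exact Gen_span hG
end
end
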